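/- A function g ∈ L^1(-1,1) belongs to the range T(LlogL(-1,1)) of the finite Hilbert transform on LlogL if and only if T̂(g) ∈ LlogL(-1,1) and T(T̂(g)) = g almost everywhere in (-1,1). -/

import Mathlib

open MeasureTheory Set Filter

noncomputable section

/-- Lebesgue measure restricted to the interval `(-1, 1)`. -/
def μI : Measure ℝ := volume.restrict (Set.Ioo (-1 : ℝ) 1)

/-- The finite Hilbert transform: the principal-value limit
`T(f)(t) = lim_{ε→0⁺} (1/π) ∫_{x∈(-1,1), |x-t|≥ε} f(x)/(x-t) dx`. -/
def FHT (f : ℝ → ℂ) (t : ℝ) : ℂ :=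
  limUnder (nhdsWithin (0 : ℝ) (Set.Ioi 0)) fun ε : ℝ =>
    (Real.pi : ℂ)⁻¹ *
      ∫ x in {x : ℝ | x ∈ Set.Ioo (-1 : ℝ) 1 ∧ ε ≤ |x - t|}, f x / ((x : ℂ) - (t : ℂ))

/-- The operator `T̂(g)(x) = -(1-x²)^{-1/2} T(t ↦ √(1-t²) g(t))(x)`. -/
def hatT (g : ℝ → ℂ) (x : ℝ) : ℂ :=
  -((Real.sqrt (1 - x ^ 2) : ℂ))⁻¹ * FHT (fun t => (Real.sqrt (1 - t ^ 2) : ℂ) * g t) x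

/-- Membership in the Zygmund space `L log L(-1,1)`:
`f` is a.e. measurable on `(-1,1)` and `∫ |f| log⁺|f| < ∞`. -/
def MemLlogL (f : ℝ → ℂ) : Prop :=
  AEStronglyMeasurable f μI ∧
    IntegrableOn (fun x => ‖f x‖ * max (Real.log ‖f x‖) 0) (Set.Ioo (-1 : ℝ) 1)

/-- The distribution function `λ ↦ |{x ∈ (-1,1) : |f(x)| > λ}|`. -/
def distFun (f : ℝ → ℂ) (lam : ℝ) : ℝ :=
  (volume {x : ℝ | x ∈ Set.Ioo (-1 : ℝ) 1 ∧ lam < ‖f x‖}).toReal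

/-- The decreasing rearrangement `f*` of `f`, a function on `(0,2)`. -/
def decRearr (f : ℝ → ℂ) (t : ℝ) : ℝ :=
  sInf {lam : ℝ | 0 ≤ lam ∧ distFun f lam ≤ t}

/-- The `L log L` norm `‖f‖ = ∫_0^2 f*(t) log(2e/t) dt`. -/
def llogLNorm (f : ℝ → ℂ) : ℝ :=
  ∫ t in Set.Ioo (0 : ℝ) 2, decRearr f t * Real.log (2 * Real.exp 1 / t)

/-- The `L(log L)^α` norm `∫_0^2 f*(t) log^α(2e/t) dt` (for `α = 0` this is the `L¹` norm). -/
def zygNorm (α : ℝ) (f : ℝ → ℂ) : ℝ :=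
  ∫ t in Set.Ioo (0 : ℝ) 2, decRearr f t * Real.log (2 * Real.exp 1 / t) ^ α

/-- Membership in the Zygmund space `L(log L)^α(-1,1)`. -/
def MemZyg (α : ℝ) (f : ℝ → ℂ) : Prop :=
  AEStronglyMeasurable f μI ∧
    IntegrableOn (fun t => decRearr f t * Real.log (2 * Real.exp 1 / t) ^ α)
      (Set.Ioo (0 : ℝ) 2)

/-- Membership in `L(log L)²(-1,1)`: `∫ |f| (log(2+|f|))² < ∞`. -/
def MemLlogL2 (f : ℝ → ℂ) : Prop :=
  AEStronglyMeasurable f μI ∧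
    IntegrableOn (fun x => ‖f x‖ * Real.log (2 + ‖f x‖) ^ 2) (Set.Ioo (-1 : ℝ) 1)

/-- The constant `c(β,γ) = max{1/(1-β), 1/(1-γ), 1/(β+γ-1)}`. -/
def cBG (β γ : ℝ) : ℝ := max (max (1 / (1 - β)) (1 / (1 - γ))) (1 / (β + γ - 1))

/-!
For real `f ∈ L¹(-1,1)`, the Cauchy transform `F` of `f` has boundary values `T f + i f` on the real
line. If moreover `T f ∈ L¹(-1,1)`, then the boundary values of `√(z² - 1) F(z)` have imaginary part
`√(1 - x²) T f` on `(-1,1)` and `0` outside, so `√(z² - 1) F(z)` differs from the Cauchy transform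
of `√(1 - x²) T f` by a constant; the real parts on `(-1,1)` give
`T̂(T f) = f + c / √(1 - x²)`. Since `1 / √(1 - x²)` belongs to `L log L` and is annihilated by `T`,
the theorem follows.

The delicate point is that `√(z² - 1) F(z)` is the Poisson integral of its boundary values. It is
dominated by a product of functions `1 + |P|` with `P` holomorphic and `im P ≥ 0`; the factors
`(1 - iδP)⁻¹` make it bounded, have modulus at most `1`, and tend to `1` as `δ → 0`.
-/
open ProbabilityTheory Complex
open UpperHalfPlane (upperHalfPlaneSet isOpen_upperHalfPlaneSet)
open scoped Topology ENNReal

namespace FiniteHilbert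

/-- The standard Cauchy distribution, with density `1 / (π (1 + x²))`. It is the weight that
makes every Poisson integral over the real line converge absolutely. -/
abbrev stdCauchy : Measure ℝ := cauchyMeasure 0 1

/-- The Poisson kernel `y / (π (s² + y²))` of the upper half-plane at height `y`, through which
harmonic functions are recovered from their boundary values on `ℝ`. -/
def halfPlaneKernel (y s : ℝ) : ℝ := Real.pi⁻¹ * (y / (s ^ 2 + y ^ 2))

section Weight

variable {E : Type*} [NormedAddCommGroup E] [NormedSpace ℝ E] {f : ℝ → E}

lemma integrable_stdCauchy_iff :
    Integrable f stdCauchy ↔ Integrable fun x ↦ (1 + x ^ 2)⁻¹ • f x := by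
  rw [stdCauchy, cauchyMeasure_of_scale_ne_zero _ one_ne_zero,
    integrable_withDensity_iff_integrable_smul' (measurable_cauchyPDF 0 1)
      (ae_of_all _ fun x ↦ by simp [cauchyPDF]),
    ← integrable_fun_smul_iff (inv_ne_zero Real.pi_ne_zero) fun x ↦ (1 + x ^ 2)⁻¹ • f x]
  refine integrable_congr (ae_of_all _ fun x ↦ ?_)
  have hpdf : cauchyPDFReal 0 1 x = Real.pi⁻¹ * (1 + x ^ 2)⁻¹ := by
    simp [cauchyPDFReal_def, add_comm]
  simp only [cauchyPDF_def, hpdf, smul_smul]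
  rw [ENNReal.toReal_ofReal (by positivity)]

lemma volume_absolutelyContinuous_stdCauchy : volume ≪ stdCauchy := by
  rw [stdCauchy, cauchyMeasure_of_scale_ne_zero _ one_ne_zero]
  refine withDensity_absolutelyContinuous' (measurable_cauchyPDF 0 1).aemeasurable
    (ae_of_all _ fun x ↦ ?_)
  simpa [cauchyPDF] using cauchyPDF_pos 0 one_ne_zero x

lemma stdCauchy_absolutelyContinuous_volume : stdCauchy ≪ volume := by
  rw [stdCauchy, cauchyMeasure_of_scale_ne_zero _ one_ne_zero]
  exact withDensity_absolutelyContinuous _ _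

lemma integrable_stdCauchy_of_integrable (hf : Integrable f) : Integrable f stdCauchy := by
  refine integrable_stdCauchy_iff.2 <| hf.norm.mono'
    ((show Measurable fun x : ℝ ↦ (1 + x ^ 2)⁻¹ by fun_prop).aestronglyMeasurable.smul hf.1)
    (ae_of_all _ fun x ↦ ?_)
  rw [norm_smul, Real.norm_of_nonneg (by positivity)]
  exact mul_le_of_le_one_left (norm_nonneg _) (inv_le_one_of_one_le₀ (by nlinarith))

lemma locallyIntegrable_of_integrable_stdCauchy (hf : Integrable f stdCauchy) :
    LocallyIntegrable f := by
  have hfw := (integrable_stdCauchy_iff.1 hf).locallyIntegrable.continuous_smul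
    (g := fun x ↦ 1 + x ^ 2) (by fun_prop)
  refine hfw.congr (ae_of_all _ fun x ↦ ?_)
  exact smul_inv_smul₀ (by positivity) (f x)

end Weight

section Kernel

variable {y s t x d : ℝ}

lemma halfPlaneKernel_nonneg (hy : 0 ≤ y) : 0 ≤ halfPlaneKernel y s := by
  unfold halfPlaneKernel; positivity

lemma measurable_halfPlaneKernel : Measurable (halfPlaneKernel y) := by
  unfold halfPlaneKernel; fun_prop

lemma halfPlaneKernel_le_div (hy : 0 ≤ y) : halfPlaneKernel y s ≤ y / (s ^ 2 + y ^ 2) :=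
  mul_le_of_le_one_left (by positivity) (inv_le_one_of_one_le₀ (by linarith [Real.pi_gt_three]))

lemma halfPlaneKernel_sub_le (hy : 0 ≤ y) (hd : 0 < d) (hdy : d ^ 2 ≤ (x - t) ^ 2 + y ^ 2) :
    halfPlaneKernel y (x - t) ≤ y * ((1 + 2 * t ^ 2) / d ^ 2 + 2) * (1 + x ^ 2)⁻¹ := by
  have hpos : 0 < (x - t) ^ 2 + y ^ 2 := (sq_pos_of_pos hd).trans_le hdy
  have hratio : 1 + 2 * t ^ 2 ≤ (1 + 2 * t ^ 2) / d ^ 2 * ((x - t) ^ 2 + y ^ 2) := by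
    rw [div_mul_eq_mul_div, le_div_iff₀ (by positivity)]
    gcongr
  calc halfPlaneKernel y (x - t) ≤ y / ((x - t) ^ 2 + y ^ 2) := halfPlaneKernel_le_div hy
    _ = y * (1 / ((x - t) ^ 2 + y ^ 2)) := by ring
    _ ≤ y * (((1 + 2 * t ^ 2) / d ^ 2 + 2) * (1 + x ^ 2)⁻¹) := by
        gcongr
        rw [← div_eq_mul_inv, div_le_div_iff₀ hpos (by positivity)]
        nlinarith [sq_nonneg (x - 2 * t), sq_nonneg y]
    _ = _ := by ring

lemma integral_halfPlaneKernel (hy : 0 < y) : ∫ s, halfPlaneKernel y s = 1 := by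
  lift y to NNReal using hy.le
  rw [← integral_cauchyPDFReal_eq_one 0 (γ := y) (by exact_mod_cast hy.ne')]
  refine integral_congr_ae (ae_of_all _ fun s ↦ ?_)
  simp [halfPlaneKernel, cauchyPDFReal_def, div_eq_mul_inv, mul_assoc]

variable {E : Type*} [NormedAddCommGroup E] [NormedSpace ℝ E] {f : ℝ → E}

lemma integrable_halfPlaneKernel_smul (hy : 0 < y) (t : ℝ) (hf : Integrable f stdCauchy) :
    Integrable fun x ↦ halfPlaneKernel y (x - t) • f x := by
  have hfm := (locallyIntegrable_of_integrable_stdCauchy hf).aestronglyMeasurable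
  refine ((integrable_stdCauchy_iff.1 hf).norm.const_mul (y * ((1 + 2 * t ^ 2) / y ^ 2 + 2))).mono'
    ((measurable_halfPlaneKernel.comp (measurable_sub_const t)).aestronglyMeasurable.smul hfm)
    (ae_of_all _ fun x ↦ ?_)
  rw [norm_smul, norm_smul, Real.norm_of_nonneg (halfPlaneKernel_nonneg hy.le),
    Real.norm_of_nonneg (by positivity), ← mul_assoc]
  gcongr
  exact halfPlaneKernel_sub_le hy.le hy (by nlinarith [sq_nonneg (x - t)])

end Kernel

section ApproximateIdentity

variable {y t : ℝ}

lemma exists_abs_le_two_pow_mul_and_halfPlaneKernel_le (hy : 0 < y) (s : ℝ) :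
    ∃ k : ℕ, |s| ≤ 2 ^ k * y ∧ halfPlaneKernel y s ≤ 4 * (1 / 4) ^ k / y := by
  have hex : ∃ k : ℕ, |s| ≤ 2 ^ k * y := by
    obtain ⟨k, hk⟩ := pow_unbounded_of_one_lt (|s| / y) one_lt_two
    exact ⟨k, ((div_lt_iff₀ hy).1 hk).le⟩
  classical
  refine ⟨Nat.find hex, Nat.find_spec hex, (halfPlaneKernel_le_div hy.le).trans ?_⟩
  rw [div_le_div_iff₀ (by positivity) hy]
  rcases h : Nat.find hex with _ | j
  · nlinarith [sq_nonneg s, sq_nonneg y]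
  · have hj : (2 ^ j * y) ^ 2 ≤ s ^ 2 := by
      have := Nat.find_min hex (m := j) (by omega)
      rw [← sq_abs s]
      gcongr
      exact (not_le.1 this).le
    have hscale : ((1 / 4 : ℝ)) ^ j * (2 ^ j * y) ^ 2 = y ^ 2 := by
      rw [mul_pow, ← pow_mul, mul_comm j 2, pow_mul, ← mul_assoc, ← mul_pow]; norm_num
    have h4 : (0 : ℝ) < (1 / 4) ^ j := by positivity
    rw [pow_succ]
    nlinarith [mul_le_mul_of_nonneg_left hj h4.le, mul_nonneg h4.le (sq_nonneg y)]

lemma lintegral_halfPlaneKernel_mul_le {h : ℝ → ℝ≥0∞} (hm : AEMeasurable h) {η : ℝ≥0∞}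
    (hball : ∀ r > 0, ∫⁻ x in Metric.closedBall t r, h x ≤ η * ENNReal.ofReal (2 * r))
    (hy : 0 < y) :
    ∫⁻ x, ENNReal.ofReal (halfPlaneKernel y (x - t)) * h x ≤ 16 * η := by
  have hmeas (k : ℕ) := (Metric.isClosed_closedBall (x := t) (ε := 2 ^ k * y)).measurableSet
  have hdyadic (x : ℝ) : ENNReal.ofReal (halfPlaneKernel y (x - t)) * h x ≤
      ∑' k : ℕ, ENNReal.ofReal (4 * (1 / 4) ^ k / y) *
        (Metric.closedBall t (2 ^ k * y)).indicator h x := by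
    obtain ⟨k, hk, hle⟩ := exists_abs_le_two_pow_mul_and_halfPlaneKernel_le hy (x - t)
    refine le_trans ?_ (ENNReal.le_tsum k)
    rw [indicator_of_mem (by simpa [Real.dist_eq] using hk)]
    gcongr
  calc ∫⁻ x, ENNReal.ofReal (halfPlaneKernel y (x - t)) * h x
      ≤ ∫⁻ x, ∑' k : ℕ, ENNReal.ofReal (4 * (1 / 4) ^ k / y) *
          (Metric.closedBall t (2 ^ k * y)).indicator h x := lintegral_mono hdyadic
    _ = ∑' k : ℕ, ENNReal.ofReal (4 * (1 / 4) ^ k / y) *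
          ∫⁻ x in Metric.closedBall t (2 ^ k * y), h x := by
        rw [lintegral_tsum fun k ↦ (hm.indicator (hmeas k)).const_mul _]
        simp_rw [lintegral_const_mul' _ _ ENNReal.ofReal_ne_top, lintegral_indicator (hmeas _)]
    _ ≤ ∑' k : ℕ, η * ENNReal.ofReal (8 * (1 / 2) ^ k) := by
        refine ENNReal.tsum_le_tsum fun k ↦ ?_
        refine (mul_le_mul_right (hball _ (by positivity)) _).trans_eq ?_
        rw [mul_left_comm, ← ENNReal.ofReal_mul (by positivity)]
        have hpow : (1 / 4 : ℝ) ^ k * 2 ^ k = (1 / 2) ^ k := by rw [← mul_pow]; norm_num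
        rw [← hpow]
        congr 2
        field_simp
        ring
    _ = 16 * η := by
        rw [ENNReal.tsum_mul_left, ← ENNReal.ofReal_tsum_of_nonneg (fun k ↦ by positivity)
          (summable_geometric_two.mul_left _), tsum_mul_left, tsum_geometric_two, mul_comm]
        norm_num

lemma setIntegral_closedBall_halfPlaneKernel_mul_le {h : ℝ → ℝ} (hn : ∀ x, 0 ≤ h x)
    (hloc : LocallyIntegrable h) {η δ : ℝ} (hη : 0 ≤ η) (hδ : 0 < δ)
    (hball : ∀ r, 0 < r → r ≤ δ → ∫ x in Metric.closedBall t r, h x ≤ η * (2 * r)) (hy : 0 < y) :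
    ∫ x in Metric.closedBall t δ, halfPlaneKernel y (x - t) * h x ≤ 16 * η := by
  have hB := (Metric.isClosed_closedBall (x := t) (ε := δ)).measurableSet
  have hball' (r : ℝ) (h0 : 0 < r) (hr : r ≤ δ) :
      ∫⁻ x in Metric.closedBall t r, ENNReal.ofReal (h x) ≤
        ENNReal.ofReal η * ENNReal.ofReal (2 * r) := by
    rw [← ofReal_integral_eq_lintegral_ofReal
      (hloc.integrableOn_isCompact (isCompact_closedBall t r)) (ae_of_all _ hn),
      ← ENNReal.ofReal_mul hη]
    exact ENNReal.ofReal_le_ofReal (hball r h0 hr)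
  have hmain := lintegral_halfPlaneKernel_mul_le (t := t) (η := ENNReal.ofReal η) (y := y)
    (hloc.aestronglyMeasurable.aemeasurable.ennreal_ofReal.indicator hB) (fun r hr ↦ ?_) hy
  · rw [integral_eq_lintegral_of_nonneg_ae
      (ae_of_all _ fun x ↦ mul_nonneg (halfPlaneKernel_nonneg hy.le) (hn x))
      (((measurable_halfPlaneKernel.comp (measurable_sub_const t)).aestronglyMeasurable.mul
        hloc.aestronglyMeasurable).restrict)]
    refine ENNReal.toReal_le_of_le_ofReal (by positivity) ?_
    rw [ENNReal.ofReal_mul (by norm_num), ENNReal.ofReal_ofNat, ← lintegral_indicator hB]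
    refine le_trans (lintegral_mono fun x ↦ ?_) hmain
    by_cases hx : x ∈ Metric.closedBall t δ
    · simp only [indicator_of_mem hx, ENNReal.ofReal_mul (halfPlaneKernel_nonneg hy.le), le_refl]
    · simp only [indicator_of_notMem hx, mul_zero, le_refl]
  · rw [setLIntegral_indicator hB]
    rcases le_total r δ with hrδ | hrδ
    · exact (lintegral_mono_set inter_subset_right).trans (hball' r hr hrδ)
    · refine (lintegral_mono_set inter_subset_left).trans ((hball' δ hδ le_rfl).trans ?_)
      gcongr

lemma setIntegral_compl_closedBall_halfPlaneKernel_mul_le {h : ℝ → ℝ} (hn : ∀ x, 0 ≤ h x)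
    (hi : Integrable h stdCauchy) {δ : ℝ} (hδ : 0 < δ) (hy : 0 < y) :
    ∫ x in (Metric.closedBall t δ)ᶜ, halfPlaneKernel y (x - t) * h x ≤
      y * (((1 + 2 * t ^ 2) / δ ^ 2 + 2) * ∫ x, (1 + x ^ 2)⁻¹ • h x) := by
  have hw := (integrable_stdCauchy_iff.1 hi).const_mul (y * ((1 + 2 * t ^ 2) / δ ^ 2 + 2))
  rw [← mul_assoc, ← integral_const_mul]
  refine (setIntegral_mono_on (integrable_halfPlaneKernel_smul hy t hi).integrableOn
    hw.integrableOn Metric.isClosed_closedBall.measurableSet.compl fun x hx ↦ ?_).trans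
    (setIntegral_le_integral hw (ae_of_all _ fun x ↦ ?_))
  · have hx' : δ < |x - t| := by simpa [Real.dist_eq] using hx
    have hsq : δ ^ 2 ≤ (x - t) ^ 2 + y ^ 2 := by
      rw [← sq_abs (x - t)]
      nlinarith [sq_nonneg y]
    simp only [smul_eq_mul, ← mul_assoc]
    exact mul_le_mul_of_nonneg_right (halfPlaneKernel_sub_le hy.le hδ hsq) (hn x)
  · have := hn x
    simp only [Pi.zero_apply, smul_eq_mul]
    positivity

lemma tendsto_integral_halfPlaneKernel_mul_of_average {h : ℝ → ℝ} (hn : ∀ x, 0 ≤ h x)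
    (hi : Integrable h stdCauchy)
    (hL : Tendsto (fun r ↦ ⨍ x in Metric.closedBall t r, h x) (𝓝[>] 0) (𝓝 0)) :
    Tendsto (fun y ↦ ∫ x, halfPlaneKernel y (x - t) * h x) (𝓝[>] 0) (𝓝 0) := by
  refine tendsto_order.2 ⟨fun a ha ↦ ?_, fun e he ↦ ?_⟩
  · filter_upwards [self_mem_nhdsWithin] with y hy
    exact ha.trans_le (integral_nonneg fun x ↦
      mul_nonneg (halfPlaneKernel_nonneg (le_of_lt hy)) (hn x))
  obtain ⟨d, hd, hsmall⟩ := mem_nhdsGT_iff_exists_Ioc_subset.1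
    (hL.eventually_lt_const (show 0 < e / 32 by positivity))
  have hd : 0 < d := hd
  have hball (r : ℝ) (h0 : 0 < r) (hr : r ≤ d) :
      ∫ x in Metric.closedBall t r, h x ≤ e / 32 * (2 * r) := by
    have havg : ⨍ x in Metric.closedBall t r, h x < e / 32 := hsmall ⟨h0, hr⟩
    rw [setAverage_eq, Real.volume_real_closedBall h0.le, smul_eq_mul,
      inv_mul_lt_iff₀ (by positivity)] at havg
    linarith
  set C := ((1 + 2 * t ^ 2) / d ^ 2 + 2) * ∫ x, (1 + x ^ 2)⁻¹ • h x
  have hfar : Tendsto (fun y : ℝ ↦ y * C) (𝓝[>] 0) (𝓝 0) := by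
    simpa using ((continuous_mul_const C).tendsto 0).mono_left nhdsWithin_le_nhds
  filter_upwards [hfar.eventually_lt_const (half_pos he), self_mem_nhdsWithin] with y hyC hy
  have hKh : Integrable fun x ↦ halfPlaneKernel y (x - t) * h x :=
    integrable_halfPlaneKernel_smul hy t hi
  rw [← integral_add_compl (Metric.isClosed_closedBall (x := t) (ε := d)).measurableSet hKh]
  have hnear := setIntegral_closedBall_halfPlaneKernel_mul_le hn
    (locallyIntegrable_of_integrable_stdCauchy hi) (by positivity) hd hball hy
  have hfar' := setIntegral_compl_closedBall_halfPlaneKernel_mul_le (t := t) hn hi hd hy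
  linarith

variable {E : Type*} [NormedAddCommGroup E] [NormedSpace ℝ E] {f : ℝ → E}

lemma ae_tendsto_integral_halfPlaneKernel_mul_norm_sub (hf : Integrable f stdCauchy) :
    ∀ᵐ t, Tendsto (fun y ↦ ∫ x, halfPlaneKernel y (x - t) * ‖f x - f t‖) (𝓝[>] 0) (𝓝 0) := by
  filter_upwards [IsUnifLocDoublingMeasure.ae_tendsto_average_norm_sub volume
    (locallyIntegrable_of_integrable_stdCauchy hf) 1] with t ht
  refine tendsto_integral_halfPlaneKernel_mul_of_average (fun x ↦ norm_nonneg _)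
    (hf.sub (integrable_const (f t))).norm (ht (fun _ ↦ t) (fun r ↦ r) tendsto_id ?_)
  filter_upwards [self_mem_nhdsWithin] with r hr
  simpa using le_of_lt hr

lemma tendsto_integral_smul_of_abs_le_halfPlaneKernel [CompleteSpace E] {K : ℝ → ℝ → ℝ} {κ : ℝ}
    (hf : Integrable f stdCauchy) (hKm : ∀ y > 0, Measurable (K y))
    (hK : ∀ y > 0, ∀ s, |K y s| ≤ halfPlaneKernel y s) (hκ : ∀ y > 0, ∫ s, K y s = κ)
    (ht : Tendsto (fun y ↦ ∫ x, halfPlaneKernel y (x - t) * ‖f x - f t‖) (𝓝[>] 0) (𝓝 0)) :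
    Tendsto (fun y ↦ ∫ x, K y (x - t) • f x) (𝓝[>] 0) (𝓝 (κ • f t)) := by
  have hint (y : ℝ) (hy : 0 < y) {g : ℝ → E} (hg : Integrable g stdCauchy) :
      Integrable fun x ↦ K y (x - t) • g x := by
    refine (integrable_halfPlaneKernel_smul hy t hg).mono
      (((hKm y hy).comp (measurable_sub_const t)).aestronglyMeasurable.smul
        (locallyIntegrable_of_integrable_stdCauchy hg).aestronglyMeasurable)
      (ae_of_all _ fun x ↦ ?_)
    rw [norm_smul, norm_smul]
    gcongr
    exact (hK y hy _).trans (le_abs_self _)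
  have hfsub := hf.sub (integrable_const (f t))
  rw [tendsto_iff_norm_sub_tendsto_zero]
  refine squeeze_zero' (Eventually.of_forall fun _ ↦ norm_nonneg _) ?_ ht
  filter_upwards [self_mem_nhdsWithin] with y hy
  have hdiff : (∫ x, K y (x - t) • f x) - κ • f t = ∫ x, K y (x - t) • (f x - f t) := by
    simp_rw [smul_sub]
    rw [integral_sub (hint y hy hf) (hint y hy (integrable_const _)), integral_smul_const,
      integral_sub_right_eq_self (K y) t, hκ y hy]
  rw [hdiff]
  refine norm_integral_le_of_norm_le (integrable_halfPlaneKernel_smul hy t hfsub.norm)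
    (ae_of_all _ fun x ↦ ?_)
  rw [norm_smul]
  exact mul_le_mul_of_nonneg_right (hK y hy _) (norm_nonneg _)

lemma ae_tendsto_integral_halfPlaneKernel_smul [CompleteSpace E] (hf : Integrable f stdCauchy) :
    ∀ᵐ t, Tendsto (fun y ↦ ∫ x, halfPlaneKernel y (x - t) • f x) (𝓝[>] 0) (𝓝 (f t)) := by
  filter_upwards [ae_tendsto_integral_halfPlaneKernel_mul_norm_sub hf] with t ht
  simpa using tendsto_integral_smul_of_abs_le_halfPlaneKernel hf
    (fun _ _ ↦ measurable_halfPlaneKernel)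
    (fun y hy s ↦ (abs_of_nonneg (halfPlaneKernel_nonneg (le_of_lt hy))).le)
    (fun _ ↦ integral_halfPlaneKernel) ht

end ApproximateIdentity

section PoissonFormula

variable {E : Type*} [NormedAddCommGroup E] [NormedSpace ℝ E]

lemma integral_stdCauchy (f : ℝ → E) :
    ∫ x, f x ∂stdCauchy = ∫ x, halfPlaneKernel 1 x • f x := by
  rw [stdCauchy, cauchyMeasure_of_scale_ne_zero _ one_ne_zero,
    integral_withDensity_eq_integral_toReal_smul (measurable_cauchyPDF 0 1)
      (ae_of_all _ fun x ↦ by simp [cauchyPDF])]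
  refine integral_congr_ae (ae_of_all _ fun x ↦ ?_)
  simp only [cauchyPDF_def, ENNReal.toReal_ofReal (cauchyPDF_pos 0 one_ne_zero x).le]
  simp [halfPlaneKernel, cauchyPDFReal_def]

lemma integral_stdCauchy_comp_add_mul (f : ℝ → E) {y : ℝ} (hy : 0 < y) (t : ℝ) :
    ∫ s, f (t + y * s) ∂stdCauchy = ∫ x, halfPlaneKernel y (x - t) • f x := by
  have hker (s : ℝ) : halfPlaneKernel 1 s = y * halfPlaneKernel y (t + y * s - t) := by
    unfold halfPlaneKernel
    field_simp
    ring
  rw [integral_stdCauchy, ← integral_add_left_eq_self (fun x ↦ halfPlaneKernel y (x - t) • f x) t]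
  have hscale := Measure.integral_comp_mul_left
    (fun x ↦ halfPlaneKernel y (t + x - t) • f (t + x)) y
  rw [abs_of_pos (inv_pos.2 hy)] at hscale
  simp_rw [hker, mul_smul]
  rw [integral_smul, hscale, smul_inv_smul₀ hy.ne']

lemma ofReal_add_I_ne_zero (s : ℝ) : (s : ℂ) + I ≠ 0 := fun h ↦ by simpa using congrArg im h

lemma circleMap_two_mul_arctan_add_pi (r s : ℝ) :
    circleMap 0 r (2 * Real.arctan s + Real.pi) = r * ((s - I) / (s + I)) := by
  have hsq : (0 : ℝ) < 1 + s ^ 2 := by positivity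
  have hexp : exp (Real.arctan s * I) = (1 + s * I) / √(1 + s ^ 2) := by
    rw [exp_mul_I, ← ofReal_cos, ← ofReal_sin, Real.cos_arctan, Real.sin_arctan]
    push_cast
    ring
  have hsqrt : ((√(1 + s ^ 2) : ℝ) : ℂ) ^ 2 = (1 + s * I) * (1 - s * I) := by
    rw [← ofReal_pow, Real.sq_sqrt hsq.le]
    push_cast
    linear_combination (s : ℂ) ^ 2 * I_sq
  have hne : (1 : ℂ) - s * I ≠ 0 := fun h ↦ by simpa using congrArg re h
  have hne' : (1 : ℂ) + s * I ≠ 0 := fun h ↦ by simpa using congrArg re h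
  rw [circleMap, zero_add, show ((2 * Real.arctan s + Real.pi : ℝ) : ℂ) * I =
    Real.pi * I + (2 : ℕ) * (Real.arctan s * I) by push_cast; ring, exp_add, exp_pi_mul_I,
    exp_nat_mul, hexp, div_pow, hsqrt]
  congr 1
  rw [sq, mul_div_mul_left _ _ hne', neg_one_mul, neg_eq_iff_eq_neg, ← neg_div,
    div_eq_div_iff hne (ofReal_add_I_ne_zero s)]
  linear_combination (2 * s : ℂ) * I_sq

lemma circleAverage_eq_integral_stdCauchy (F : ℂ → E) (r : ℝ) :
    Real.circleAverage F 0 r = ∫ s : ℝ, F (r * ((s - I) / (s + I))) ∂stdCauchy := by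
  have himage : (fun s ↦ 2 * Real.arctan s + Real.pi) '' univ = Ioo 0 (2 * Real.pi) := by
    rw [image_univ, show (fun s ↦ 2 * Real.arctan s + Real.pi) =
      (2 * · + Real.pi) ∘ Real.arctan from rfl, range_comp, Real.range_arctan,
      image_affine_Ioo two_pos]
    congr 1 <;> ring
  have hderiv (s : ℝ) : HasDerivWithinAt (fun s ↦ 2 * Real.arctan s + Real.pi)
      (2 * (1 / (1 + s ^ 2))) univ s :=
    (((Real.hasDerivAt_arctan s).const_mul 2).add_const Real.pi).hasDerivWithinAt
  have hinj : InjOn (fun s ↦ 2 * Real.arctan s + Real.pi) univ := fun a _ b _ hab ↦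
    Real.arctan_injective (by linarith [show 2 * Real.arctan a + Real.pi = _ from hab])
  rw [Real.circleAverage, intervalIntegral.integral_of_le Real.two_pi_pos.le,
    integral_Ioc_eq_integral_Ioo, ← himage, integral_image_eq_integral_abs_deriv_smul
      MeasurableSet.univ (fun s _ ↦ hderiv s) hinj, setIntegral_univ, ← integral_smul,
    integral_stdCauchy]
  refine integral_congr_ae (ae_of_all _ fun s ↦ ?_)
  simp only [circleMap_two_mul_arctan_add_pi, smul_smul, halfPlaneKernel]
  congr 1
  rw [abs_of_pos (by positivity)]
  field_simp
  ring

variable {B : ℂ → ℂ} {M t η y : ℝ}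

lemma norm_sub_I_div_add_I (s : ℝ) : ‖((s : ℂ) - I) / (s + I)‖ = 1 := by
  rw [norm_div, div_eq_one_iff_eq (norm_ne_zero_iff.2 (ofReal_add_I_ne_zero s)),
    ← norm_conj ((s : ℂ) + I)]
  simp [sub_eq_add_neg]

lemma sub_I_div_add_I_ne_one (s : ℝ) : ((s : ℂ) - I) / (s + I) ≠ 1 := by
  rw [Ne, div_eq_one_iff_eq (ofReal_add_I_ne_zero s)]
  exact fun h ↦ absurd (congrArg im h) (by norm_num)

/-- The biholomorphism of the unit disc onto `{z | η < im z}` that sends `0` to `t + (η + y) i`. -/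
def cayley (t η y : ℝ) (w : ℂ) : ℂ := t + η * I + y * (I * ((1 + w) / (1 - w)))

lemma cayley_zero : cayley t η y 0 = t + (η + y) * I := by
  simp [cayley]
  ring

lemma im_cayley (w : ℂ) :
    (cayley t η y w).im = η + y * ((1 - normSq w) / normSq (1 - w)) := by
  simp only [cayley, add_im, mul_im, I_re, I_im, div_re, normSq_apply, ofReal_re, ofReal_im,
    add_re, sub_re, sub_im, one_re, one_im]
  ring

lemma le_im_cayley (hy : 0 ≤ y) {w : ℂ} (hw : ‖w‖ ≤ 1) : η ≤ (cayley t η y w).im := by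
  rw [im_cayley, normSq_eq_norm_sq]
  have : 0 ≤ (1 - ‖w‖ ^ 2) / normSq (1 - w) :=
    div_nonneg (by nlinarith [norm_nonneg w]) (normSq_nonneg _)
  nlinarith

lemma differentiableAt_cayley {w : ℂ} (hw : w ≠ 1) : DifferentiableAt ℂ (cayley t η y) w := by
  unfold cayley
  fun_prop (disch := exact sub_ne_zero.2 hw.symm)

lemma cayley_sub_I_div_add_I (s : ℝ) :
    cayley t η y ((s - I) / (s + I)) = (t + y * s : ℝ) + η * I := by
  have h := ofReal_add_I_ne_zero s
  have hcayley : (1 + ((s : ℂ) - I) / (s + I)) / (1 - (s - I) / (s + I)) = s / I := by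
    have : 1 - ((s : ℂ) - I) / (s + I) = 2 * I / (s + I) := by field_simp; ring
    rw [this]
    field_simp [I_ne_zero]
    ring
  rw [cayley, hcayley, mul_div_cancel₀ _ I_ne_zero]
  push_cast
  ring

lemma differentiableAt_comp_cayley (hB : DifferentiableOn ℂ B upperHalfPlaneSet) (hη : 0 < η)
    (hy : 0 ≤ y) {w : ℂ} (hw : ‖w‖ ≤ 1) (hw1 : w ≠ 1) :
    DifferentiableAt ℂ (fun w ↦ B (cayley t η y w)) w :=
  (hB.differentiableAt (isOpen_upperHalfPlaneSet.mem_nhds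
    (hη.trans_le (le_im_cayley hy hw)))).comp w (differentiableAt_cayley hw1)

lemma norm_mul_sub_I_div_add_I_lt_one {r : ℝ} (hr : r ∈ Ioo (0 : ℝ) 1) (s : ℝ) :
    ‖(r : ℂ) * ((s - I) / (s + I))‖ < 1 := by
  rw [norm_mul, norm_sub_I_div_add_I, mul_one, norm_real, Real.norm_of_nonneg hr.1.le]
  exact hr.2

lemma integral_comp_cayley (hB : DifferentiableOn ℂ B upperHalfPlaneSet) (hη : 0 < η)
    (hy : 0 ≤ y) {r : ℝ} (hr : r ∈ Ioo (0 : ℝ) 1) :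
    ∫ s : ℝ, B (cayley t η y (r * ((s - I) / (s + I)))) ∂stdCauchy = B (t + (η + y) * I) := by
  rw [← circleAverage_eq_integral_stdCauchy (fun w ↦ B (cayley t η y w)), ← cayley_zero]
  refine DiffContOnCl.circleAverage (f := fun w ↦ B (cayley t η y w))
    (DifferentiableOn.diffContOnCl fun w hw ↦ ?_)
  rw [closure_ball _ (by simpa using hr.1.ne'), mem_closedBall_zero_iff, abs_of_pos hr.1] at hw
  have hw1 : ‖w‖ < 1 := hw.trans_lt hr.2
  exact (differentiableAt_comp_cayley hB hη hy hw1.le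
    (by rintro rfl; simp at hw1)).differentiableWithinAt

theorem poisson_formula (hB : DifferentiableOn ℂ B upperHalfPlaneSet)
    (hM : ∀ z : ℂ, η ≤ z.im → ‖B z‖ ≤ M) (hη : 0 < η) (hy : 0 < y) (t : ℝ) :
    B (t + (η + y) * I) = ∫ x : ℝ, halfPlaneKernel y (x - t) • B (x + η * I) := by
  have hIoo : ∀ᶠ r : ℝ in 𝓝[<] 1, r ∈ Ioo (0 : ℝ) 1 := Ioo_mem_nhdsLT one_pos
  have hlim : Tendsto (fun r : ℝ ↦ ∫ s : ℝ, B (cayley t η y (r * ((s - I) / (s + I)))) ∂stdCauchy)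
      (𝓝[<] 1) (𝓝 (∫ s : ℝ, B (cayley t η y ((s - I) / (s + I))) ∂stdCauchy)) := by
    refine tendsto_integral_filter_of_dominated_convergence (fun _ ↦ M) ?_ ?_ (integrable_const M)
      (ae_of_all _ fun s ↦ ?_)
    · filter_upwards [hIoo] with r hr
      refine Continuous.aestronglyMeasurable (continuous_iff_continuousAt.2 fun s ↦ ?_)
      have hlt := norm_mul_sub_I_div_add_I_lt_one hr s
      exact (differentiableAt_comp_cayley hB hη hy.le hlt.le
        (fun h ↦ by simp [h] at hlt)).continuousAt.comp
        (f := fun s : ℝ ↦ (r : ℂ) * ((s - I) / (s + I)))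
        (by fun_prop (disch := exact ofReal_add_I_ne_zero s))
    · filter_upwards [hIoo] with r hr
      exact ae_of_all _ fun s ↦ hM _ (le_im_cayley hy.le (norm_mul_sub_I_div_add_I_lt_one hr s).le)
    · have hcont := (differentiableAt_comp_cayley (t := t) hB hη hy.le (norm_sub_I_div_add_I s).le
        (sub_I_div_add_I_ne_one s)).continuousAt
      refine hcont.tendsto.comp (tendsto_nhdsWithin_of_tendsto_nhds ?_)
      simpa using ((continuous_ofReal.mul_const (((s : ℂ) - I) / (s + I))).tendsto 1)
  rw [← integral_stdCauchy_comp_add_mul (fun x : ℝ ↦ B (x + η * I)) hy]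
  simp_rw [cayley_sub_I_div_add_I] at hlim
  refine tendsto_nhds_unique (tendsto_const_nhds.congr' ?_) hlim
  filter_upwards [hIoo] with r hr using (integral_comp_cayley hB hη hy.le hr).symm

lemma tendsto_vertical (hB : DifferentiableOn ℂ B upperHalfPlaneSet) (hy : 0 < y) :
    Tendsto (fun η : ℝ ↦ B (t + (η + y) * I)) (𝓝 0) (𝓝 (B (t + y * I))) := by
  have hcont : Continuous fun η : ℝ ↦ (t : ℂ) + (η + y) * I := by fun_prop
  have hBy : ContinuousAt B (t + ((0 : ℝ) + y) * I) :=
    (hB.differentiableAt (isOpen_upperHalfPlaneSet.mem_nhds (by simpa using hy))).continuousAt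
  simpa [Function.comp_def] using hBy.tendsto.comp (hcont.tendsto 0)

lemma continuous_horizontal (hB : DifferentiableOn ℂ B upperHalfPlaneSet) (hη : 0 < η) :
    Continuous fun x : ℝ ↦ B (x + η * I) :=
  hB.continuousOn.comp_continuous (by fun_prop) fun x ↦ by simpa using hη

theorem poisson_representation {m : ℝ → ℝ} {b : ℝ → ℂ}
    (hB : DifferentiableOn ℂ B upperHalfPlaneSet)
    (hM : ∀ η : ℝ, 0 < η → ∃ M, ∀ z : ℂ, η ≤ z.im → ‖B z‖ ≤ M) (hm : Integrable m stdCauchy)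
    (hBm : ∀ η : ℝ, 0 < η → ∀ᵐ x : ℝ, ‖B (x + η * I)‖ ≤ m x)
    (hb : ∀ᵐ x : ℝ, Tendsto (fun η : ℝ ↦ B (x + η * I)) (𝓝[>] 0) (𝓝 (b x)))
    (hy : 0 < y) (t : ℝ) :
    B (t + y * I) = ∫ x, halfPlaneKernel y (x - t) • b x := by
  have hpoisson : ∀ᶠ η : ℝ in 𝓝[>] 0,
      ∫ x : ℝ, halfPlaneKernel y (x - t) • B (x + η * I) = B (t + (η + y) * I) := by
    filter_upwards [self_mem_nhdsWithin] with η hη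
    obtain ⟨M, hM⟩ := hM η hη
    exact (poisson_formula hB hM hη hy t).symm
  have hvert : Tendsto (fun η : ℝ ↦ B (t + (η + y) * I)) (𝓝[>] 0) (𝓝 (B (t + y * I))) :=
    (tendsto_vertical hB hy).mono_left nhdsWithin_le_nhds
  refine tendsto_nhds_unique (hvert.congr' (hpoisson.mono fun _ h ↦ h.symm)) ?_
  refine tendsto_integral_filter_of_dominated_convergence
    (fun x ↦ halfPlaneKernel y (x - t) * m x) ?_ ?_ (integrable_halfPlaneKernel_smul hy t hm) ?_
  · filter_upwards [self_mem_nhdsWithin] with η hη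
    exact (measurable_halfPlaneKernel.comp (measurable_sub_const t)).aestronglyMeasurable.smul
      (continuous_horizontal hB hη).aestronglyMeasurable
  · filter_upwards [self_mem_nhdsWithin] with η hη
    filter_upwards [hBm η hη] with x hx
    rw [norm_smul, Real.norm_of_nonneg (halfPlaneKernel_nonneg hy.le)]
    exact mul_le_mul_of_nonneg_left hx (halfPlaneKernel_nonneg hy.le)
  · filter_upwards [hb] with x hx using hx.const_smul _

end PoissonFormula

section Fatou

lemma exists_weak_limit_of_norm_le {𝕜 H ι : Type*} [RCLike 𝕜] [NormedAddCommGroup H]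
    [InnerProductSpace 𝕜 H] [CompleteSpace H] {φ : ι → H} {R : ℝ} (hφ : ∀ n, ‖φ n‖ ≤ R)
    (U : Ultrafilter ι) :
    ∃ x : H, ∀ g : H, Tendsto (fun n ↦ inner 𝕜 g (φ n)) U (𝓝 (inner 𝕜 g x)) := by
  set ℓ : ι → WeakDual 𝕜 H := fun n ↦ StrongDual.toWeakDual (InnerProductSpace.toDual 𝕜 H (φ n))
  obtain ⟨x, -, hx⟩ := (WeakDual.isCompact_closedBall (𝕜 := 𝕜) (E := H) 0 R).ultrafilter_le_nhds
    (U.map ℓ) <| le_principal_iff.2 <| mem_map.2 <| univ_mem' fun n ↦ by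
      simpa [ℓ] using hφ n
  have hℓ : Tendsto ℓ U (𝓝 x) := hx
  refine ⟨(InnerProductSpace.toDual 𝕜 H).symm (WeakDual.toStrongDual x), fun g ↦ ?_⟩
  have hinner := RCLike.continuous_conj.tendsto _ |>.comp
    (((WeakDual.eval_continuous g).tendsto x).comp hℓ)
  rw [← inner_conj_symm, InnerProductSpace.toDual_symm_apply]
  refine hinner.congr fun n ↦ ?_
  exact inner_conj_symm g (φ n)

lemma exists_weak_limit_of_bounded {α ι : Type*} [MeasurableSpace α] {μ : Measure α}
    [IsFiniteMeasure μ] {F : ι → α → ℂ} {M : ℝ} (hF : ∀ n, AEStronglyMeasurable (F n) μ)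
    (hM : ∀ n, ∀ᵐ x ∂μ, ‖F n x‖ ≤ M) (U : Ultrafilter ι) :
    ∃ b : α → ℂ, MemLp b 2 μ ∧ ∀ k : α → ℂ, MemLp k 2 μ →
      Tendsto (fun n ↦ ∫ x, k x * F n x ∂μ) U (𝓝 (∫ x, k x * b x ∂μ)) := by
  have hL (n : ι) : MemLp (F n) 2 μ := .of_bound (hF n) M (hM n)
  have hnorm (n : ι) : ‖(hL n).toLp (F n)‖ ≤ μ.real univ ^ (2 : ℝ≥0∞).toReal⁻¹ * |M| :=
    Lp.norm_le_of_ae_bound (abs_nonneg M) <| by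
      filter_upwards [(hL n).coeFn_toLp, hM n] with x hx hMx
      exact hx ▸ hMx.trans (le_abs_self M)
  obtain ⟨b, hb⟩ := exists_weak_limit_of_norm_le (𝕜 := ℂ) hnorm U
  refine ⟨b, Lp.memLp b, fun k hk ↦ ?_⟩
  have hpair (c : Lp ℂ 2 μ) : inner ℂ (hk.star.toLp _) c = ∫ x, k x * c x ∂μ := by
    rw [L2.inner_def]
    refine integral_congr_ae ?_
    filter_upwards [hk.star.coeFn_toLp] with x hx
    simp [hx, RCLike.inner_apply, mul_comm]
  have hlim := hb (hk.star.toLp _)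
  simp_rw [hpair] at hlim
  refine hlim.congr fun n ↦ integral_congr_ae ?_
  filter_upwards [(hL n).coeFn_toLp] with x hx
  rw [hx]

variable {B : ℂ → ℂ} {M y : ℝ}

lemma memLp_halfPlaneKernel_ratio (hy : 0 < y) (t : ℝ) :
    MemLp (fun x ↦ ((halfPlaneKernel y (x - t) / halfPlaneKernel 1 x : ℝ) : ℂ)) 2 stdCauchy := by
  refine .of_bound ((continuous_ofReal.measurable.comp ((measurable_halfPlaneKernel.comp
    (measurable_sub_const t)).div measurable_halfPlaneKernel)).aestronglyMeasurable)
    (y * ((1 + 2 * t ^ 2) / y ^ 2 + 2) * Real.pi) (ae_of_all _ fun x ↦ ?_)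
  have hK : halfPlaneKernel 1 x = Real.pi⁻¹ * (1 + x ^ 2)⁻¹ := by
    simp [halfPlaneKernel, add_comm]
  rw [norm_real, Real.norm_of_nonneg (div_nonneg (halfPlaneKernel_nonneg hy.le)
    (halfPlaneKernel_nonneg zero_le_one)), div_le_iff₀ (by rw [hK]; positivity), hK]
  refine (halfPlaneKernel_sub_le hy.le hy (by nlinarith [sq_nonneg (x - t)])).trans_eq ?_
  field_simp

lemma exists_poisson_representation_of_bounded (hB : DifferentiableOn ℂ B upperHalfPlaneSet)
    (hM : ∀ z : ℂ, 0 < z.im → ‖B z‖ ≤ M) :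
    ∃ b : ℝ → ℂ, Integrable b stdCauchy ∧ ∀ t y : ℝ, 0 < y →
      B (t + y * I) = ∫ x, halfPlaneKernel y (x - t) • b x := by
  have hη (n : ℕ) : (0 : ℝ) < 1 / (n + 1) := Nat.one_div_pos_of_nat
  obtain ⟨b, hb, hlim⟩ := exists_weak_limit_of_bounded (μ := stdCauchy)
    (F := fun (n : ℕ) (x : ℝ) ↦ B (x + (1 / (n + 1) : ℝ) * I))
    (fun n ↦ (continuous_horizontal hB (hη n)).aestronglyMeasurable)
    (fun n ↦ ae_of_all _ fun x ↦ hM _ (by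
      rw [add_im, ofReal_im, im_ofReal_mul, I_im, mul_one, zero_add]; exact hη n))
    (Ultrafilter.of atTop)
  refine ⟨b, hb.integrable one_le_two, fun t y hy ↦ ?_⟩
  have hcancel (c : ℝ → ℂ) : ∫ x, ((halfPlaneKernel y (x - t) / halfPlaneKernel 1 x : ℝ) : ℂ) * c x
      ∂stdCauchy = ∫ x, halfPlaneKernel y (x - t) • c x := by
    rw [integral_stdCauchy]
    refine integral_congr_ae (ae_of_all _ fun x ↦ ?_)
    have hpos : 0 < halfPlaneKernel 1 x := by unfold halfPlaneKernel; positivity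
    simp only [← real_smul, smul_smul]
    rw [mul_div_cancel₀ _ hpos.ne']
  have hlim := hlim _ (memLp_halfPlaneKernel_ratio hy t)
  simp_rw [hcancel] at hlim
  refine tendsto_nhds_unique ?_ hlim
  have hvert := ((tendsto_vertical (t := t) hB hy).comp
    tendsto_one_div_add_atTop_nhds_zero_nat).mono_left (Ultrafilter.of_le atTop)
  refine hvert.congr fun n ↦ ?_
  exact poisson_formula hB (fun z hz ↦ hM z ((hη n).trans_le hz)) (hη n) hy t

theorem ae_exists_tendsto_of_bounded (hB : DifferentiableOn ℂ B upperHalfPlaneSet)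
    (hM : ∀ z : ℂ, 0 < z.im → ‖B z‖ ≤ M) :
    ∃ b : ℝ → ℂ, ∀ᵐ t : ℝ, Tendsto (fun y : ℝ ↦ B (t + y * I)) (𝓝[>] 0) (𝓝 (b t)) := by
  obtain ⟨b, hb, hrep⟩ := exists_poisson_representation_of_bounded hB hM
  refine ⟨b, ?_⟩
  filter_upwards [ae_tendsto_integral_halfPlaneKernel_smul hb] with t ht
  refine ht.congr' ?_
  filter_upwards [self_mem_nhdsWithin] with y hy using (hrep t y hy).symm

end Fatou

section CauchyTransform

/-- The Cauchy transform `π⁻¹ ∫ f(x) / (x - z) dx` of a function on the real line, normalised like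
`FHT` so that its boundary values from above are `T f + i f`. -/
def cauchyTransform (f : ℝ → ℂ) (z : ℂ) : ℂ := (Real.pi : ℂ)⁻¹ * ∫ x, f x / (x - z)

/-- The truncated Hilbert transform `π⁻¹ ∫_{|x - t| ≥ ε} f(x) / (x - t) dx`, whose limit as `ε ↓ 0`
is the principal value. -/
def truncatedHilbert (f : ℝ → ℂ) (t ε : ℝ) : ℂ :=
  (Real.pi : ℂ)⁻¹ * ∫ x in {x : ℝ | ε ≤ |x - t|}, f x / (x - t)

variable {f g : ℝ → ℂ} {u : ℝ → ℝ} {z : ℂ} {t y ε d : ℝ}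

lemma im_le_norm_ofReal_sub (x : ℝ) (z : ℂ) : z.im ≤ ‖(x : ℂ) - z‖ := by
  simpa using (neg_le_abs _).trans (abs_im_le_norm ((x : ℂ) - z))

lemma ofReal_sub_ne_zero (hz : 0 < z.im) (x : ℝ) : (x : ℂ) - z ≠ 0 :=
  norm_pos_iff.1 (hz.trans_le (im_le_norm_ofReal_sub x z))

lemma integrable_div_sub (hf : Integrable f) (hz : 0 < z.im) :
    Integrable fun x : ℝ ↦ f x / (x - z) := by
  simp only [div_eq_mul_inv]
  refine hf.mul_bdd (c := z.im⁻¹)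
    (by fun_prop : Measurable fun x : ℝ ↦ ((x : ℂ) - z)⁻¹).aestronglyMeasurable
    (ae_of_all _ fun x ↦ ?_)
  rw [norm_inv]
  exact inv_anti₀ hz (im_le_norm_ofReal_sub x z)

lemma cauchyTransform_add (hf : Integrable f) (hg : Integrable g) (hz : 0 < z.im) :
    cauchyTransform (fun x ↦ f x + g x) z = cauchyTransform f z + cauchyTransform g z := by
  simp only [cauchyTransform, add_div]
  rw [integral_add (integrable_div_sub hf hz) (integrable_div_sub hg hz), mul_add]

lemma cauchyTransform_const_mul (c : ℂ) :
    cauchyTransform (fun x ↦ c * f x) z = c * cauchyTransform f z := by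
  simp only [cauchyTransform, mul_div_assoc]
  rw [integral_const_mul, mul_left_comm]

lemma norm_cauchyTransform_le (hf : Integrable f) (hd : 0 < d)
    (h : ∀ x : ℝ, f x ≠ 0 → d ≤ ‖(x : ℂ) - z‖) :
    ‖cauchyTransform f z‖ ≤ (Real.pi * d)⁻¹ * ∫ x, ‖f x‖ := by
  have hbound (x : ℝ) : ‖f x / (x - z)‖ ≤ d⁻¹ * ‖f x‖ := by
    obtain hx | hx := eq_or_ne (f x) 0
    · simp [hx]
    · rw [norm_div, div_eq_inv_mul]
      gcongr
      exact h x hx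
  rw [cauchyTransform, norm_mul, norm_inv, norm_real, Real.norm_of_nonneg Real.pi_nonneg, mul_inv,
    mul_assoc, ← integral_const_mul]
  gcongr
  exact norm_integral_le_of_norm_le (hf.norm.const_mul _) (ae_of_all _ hbound)

lemma differentiableOn_cauchyTransform (hf : Integrable f) :
    DifferentiableOn ℂ (cauchyTransform f) upperHalfPlaneSet := by
  intro z (hz : 0 < z.im)
  have hnhds : {w : ℂ | z.im / 2 < w.im} ∈ 𝓝 z :=
    (isOpen_lt continuous_const continuous_im).mem_nhds (half_lt_self hz)
  have hderiv := hasDerivAt_integral_of_dominated_loc_of_deriv_le (μ := volume)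
    (F := fun (w : ℂ) (x : ℝ) ↦ f x / (x - w)) (F' := fun w x ↦ f x * ((x - w) ^ 2)⁻¹)
    (bound := fun x ↦ ‖f x‖ * ((z.im / 2) ^ 2)⁻¹) hnhds ?_ (integrable_div_sub hf hz) ?_ ?_
    (hf.norm.mul_const _) ?_
  · exact (hderiv.2.differentiableAt.const_mul _).differentiableWithinAt
  · filter_upwards [isOpen_upperHalfPlaneSet.mem_nhds hz] with w hw
    exact (integrable_div_sub hf hw).1
  · exact hf.1.mul (by fun_prop : Measurable _).aestronglyMeasurable
  · refine ae_of_all _ fun x w (hw : z.im / 2 < w.im) ↦ ?_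
    rw [norm_mul, norm_inv, norm_pow]
    gcongr
    exact hw.le.trans (im_le_norm_ofReal_sub x w)
  · refine ae_of_all _ fun x w (hw : z.im / 2 < w.im) ↦ ?_
    simpa [div_eq_mul_inv] using (((hasDerivAt_id w).const_sub (x : ℂ)).inv
      (ofReal_sub_ne_zero ((half_pos hz).trans hw) x)).const_mul (f x)

lemma im_cauchyTransform_ofReal (hu : Integrable u) (hy : 0 < y) (t : ℝ) :
    (cauchyTransform (fun x ↦ u x) (t + y * I)).im = ∫ x, halfPlaneKernel y (x - t) * u x := by
  have hz : 0 < ((t : ℂ) + y * I).im := by simpa using hy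
  have him := integral_im (𝕜 := ℂ) (f := fun x : ℝ ↦ (u x : ℂ) / (x - (t + y * I)))
    (integrable_div_sub hu.ofReal hz)
  simp only [RCLike.im_to_complex] at him
  rw [cauchyTransform, ← ofReal_inv, im_ofReal_mul, ← him, ← integral_const_mul]
  refine integral_congr_ae (ae_of_all _ fun x ↦ ?_)
  have hden : normSq ((x : ℂ) - (t + y * I)) = (x - t) ^ 2 + y ^ 2 := by
    simp [normSq_apply]; ring
  simp [halfPlaneKernel, div_im, hden]
  ring

lemma im_cauchyTransform_ofReal_nonneg (hu : Integrable u) (h0 : ∀ x, 0 ≤ u x) (hz : 0 < z.im) :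
    0 ≤ (cauchyTransform (fun x ↦ u x) z).im := by
  rw [← re_add_im z, im_cauchyTransform_ofReal hu hz]
  exact integral_nonneg fun x ↦ mul_nonneg (halfPlaneKernel_nonneg hz.le) (h0 x)

lemma ae_tendsto_im_cauchyTransform_ofReal (hu : Integrable u) :
    ∀ᵐ t : ℝ, Tendsto (fun y : ℝ ↦ (cauchyTransform (fun x ↦ u x) (t + y * I)).im) (𝓝[>] 0)
      (𝓝 (u t)) := by
  filter_upwards [ae_tendsto_integral_halfPlaneKernel_smul (integrable_stdCauchy_of_integrable hu)]
    with t ht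
  refine ht.congr' ?_
  filter_upwards [self_mem_nhdsWithin] with y hy using (im_cauchyTransform_ofReal hu hy t).symm

/-- The odd kernel by which `1 / (π (s - iy)) - i y / (π (s² + y²))` differs from the truncated
kernel `1_{|s| ≥ y} / (π s)`. -/
def truncationDefect (y s : ℝ) : ℝ :=
  Real.pi⁻¹ * (s / (s ^ 2 + y ^ 2) - {s : ℝ | y ≤ |s|}.indicator (·⁻¹) s)

lemma measurable_truncationDefect : Measurable (truncationDefect y) :=
  ((by fun_prop : Measurable fun s : ℝ ↦ s / (s ^ 2 + y ^ 2)).sub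
    (measurable_inv.indicator (measurableSet_le measurable_const (by fun_prop)))).const_mul _

lemma abs_truncationDefect_le (hy : 0 < y) (s : ℝ) :
    |truncationDefect y s| ≤ halfPlaneKernel y s := by
  rw [truncationDefect, halfPlaneKernel, abs_mul, abs_of_pos (inv_pos.2 Real.pi_pos)]
  gcongr
  by_cases hs : y ≤ |s|
  · have hs0 : s ≠ 0 := abs_pos.1 (hy.trans_le hs)
    rw [indicator_of_mem (show s ∈ {s : ℝ | y ≤ |s|} from hs),
      show s / (s ^ 2 + y ^ 2) - s⁻¹ = -(y / (s ^ 2 + y ^ 2) * (y / s)) by field_simp; ring,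
      abs_neg, abs_mul, abs_of_nonneg (by positivity), abs_div, abs_of_pos hy]
    exact mul_le_of_le_one_right (by positivity) ((div_le_one (by positivity)).2 hs)
  · rw [indicator_of_notMem (show s ∉ {s : ℝ | y ≤ |s|} from hs), sub_zero, abs_div,
      abs_of_pos (by positivity : 0 < s ^ 2 + y ^ 2)]
    gcongr
    exact (not_le.1 hs).le

lemma truncationDefect_neg (s : ℝ) : truncationDefect y (-s) = -truncationDefect y s := by
  by_cases hs : y ≤ |s| <;> simp [truncationDefect, indicator, hs] <;> ring

lemma integral_truncationDefect : ∫ s, truncationDefect y s = 0 := by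
  have h := integral_neg_eq_self (truncationDefect y) volume
  simp_rw [truncationDefect_neg, integral_neg] at h
  linarith

lemma integrableOn_div_sub (hf : Integrable f) (hε : 0 < ε) :
    IntegrableOn (fun x : ℝ ↦ f x / (x - t)) {x : ℝ | ε ≤ |x - t|} := by
  simp only [div_eq_mul_inv]
  refine hf.integrableOn.mul_bdd (c := ε⁻¹)
    (by fun_prop : Measurable fun x : ℝ ↦ ((x : ℂ) - t)⁻¹).aestronglyMeasurable ?_
  filter_upwards [ae_restrict_mem (measurableSet_le measurable_const (by fun_prop))] with x hx
  rw [norm_inv, ← ofReal_sub, norm_real]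
  exact inv_anti₀ hε hx

lemma cauchyTransform_sub_truncatedHilbert (hf : Integrable f) (hy : 0 < y) (t : ℝ) :
    cauchyTransform f (t + y * I) - truncatedHilbert f t y =
      (∫ x, truncationDefect y (x - t) • f x) + I * ∫ x, halfPlaneKernel y (x - t) • f x := by
  have hz : 0 < ((t : ℂ) + y * I).im := by simpa using hy
  have hS : MeasurableSet {x : ℝ | y ≤ |x - t|} := measurableSet_le measurable_const (by fun_prop)
  have hK := integrable_halfPlaneKernel_smul hy t (integrable_stdCauchy_of_integrable hf)
  have hD : Integrable fun x ↦ truncationDefect y (x - t) • f x :=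
    hK.norm.mono' ((measurable_truncationDefect.comp
      (measurable_sub_const t)).aestronglyMeasurable.smul hf.1) <| ae_of_all _ fun x ↦ by
        rw [norm_smul, norm_smul]
        gcongr
        exact (abs_truncationDefect_le hy _).trans (le_abs_self _)
  rw [cauchyTransform, truncatedHilbert, ← integral_indicator hS, ← mul_sub,
    ← integral_sub (integrable_div_sub hf hz)
      ((integrable_indicator_iff hS).2 (integrableOn_div_sub hf hy)),
    ← integral_const_mul, ← integral_const_mul, ← integral_add hD (hK.const_mul I)]
  refine integral_congr_ae (ae_of_all _ fun x ↦ ?_)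
  have hne := ofReal_sub_ne_zero hz x
  have hsq : ((x : ℂ) - t) ^ 2 + y ^ 2 ≠ 0 := by
    exact_mod_cast (by positivity : (x - t) ^ 2 + y ^ 2 ≠ 0)
  have hker : 1 / ((x : ℂ) - (t + y * I)) = (x - t) / ((x - t) ^ 2 + y ^ 2) +
      I * (y / ((x - t) ^ 2 + y ^ 2)) := by
    field_simp
    linear_combination (y : ℂ) ^ 2 * I_sq
  dsimp only
  rw [div_eq_mul_one_div (f x), hker]
  by_cases hx : y ≤ |x - t| <;>
    simp [truncationDefect, halfPlaneKernel, indicator, hx] <;> ring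

lemma ae_tendsto_cauchyTransform_sub_truncatedHilbert (hf : Integrable f) :
    ∀ᵐ t : ℝ, Tendsto (fun y : ℝ ↦ cauchyTransform f (t + y * I) - truncatedHilbert f t y) (𝓝[>] 0)
      (𝓝 (I * f t)) := by
  have hfC := integrable_stdCauchy_of_integrable hf
  filter_upwards [ae_tendsto_integral_halfPlaneKernel_mul_norm_sub hfC,
    ae_tendsto_integral_halfPlaneKernel_smul hfC] with t hLeb hPoisson
  have hdefect := tendsto_integral_smul_of_abs_le_halfPlaneKernel hfC
    (fun _ _ ↦ measurable_truncationDefect) (fun _ ↦ abs_truncationDefect_le)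
    (fun _ _ ↦ integral_truncationDefect) hLeb
  refine Tendsto.congr' ?_ (by simpa using hdefect.add (hPoisson.const_mul I))
  filter_upwards [self_mem_nhdsWithin] with y hy
  exact (cauchyTransform_sub_truncatedHilbert hf hy t).symm

end CauchyTransform

section BoundaryValues

variable {f : ℝ → ℂ} {u : ℝ → ℝ} {z : ℂ} {t : ℝ}

lemma exists_tendsto_of_tendsto_exp {h : ℝ → ℂ} {a : ℂ} (hc : ContinuousOn h (Ioi t)) (ha : a ≠ 0)
    (hlim : Tendsto (fun y ↦ exp (h y)) (𝓝[>] t) (𝓝 a)) : ∃ c, Tendsto h (𝓝[>] t) (𝓝 c) := by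
  have hdiv : Tendsto (fun y ↦ exp (h y) / a) (𝓝[>] t) (𝓝 1) := by simpa [ha] using hlim.div_const a
  obtain ⟨t', ht', hslit⟩ := mem_nhdsGT_iff_exists_Ioo_subset.1
    (hdiv.eventually (isOpen_slitPlane.mem_nhds one_mem_slitPlane))
  have hcont : ContinuousOn (fun y ↦ h y - log (exp (h y) / a)) (Ioo t t') := by
    have hc := hc.mono (Ioo_subset_Ioi_self : Ioo t t' ⊆ Ioi t)
    exact hc.sub ((hc.cexp.div_const a).clog hslit)
  have hexp (y : ℝ) : exp (h y - log (exp (h y) / a)) = a := by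
    rw [exp_sub, exp_log (div_ne_zero (exp_ne_zero _) ha), div_div_cancel₀ (exp_ne_zero _)]
  obtain ⟨y₀, hy₀⟩ : (Ioo t t').Nonempty := nonempty_Ioo.2 ht'
  refine ⟨h y₀ - log (exp (h y₀) / a) + 0, Tendsto.congr' ?_
    ((by simpa using hdiv.clog one_mem_slitPlane :
      Tendsto (fun y ↦ log (exp (h y) / a)) (𝓝[>] t) (𝓝 0)).const_add _)⟩
  filter_upwards [Ioo_mem_nhdsGT ht'] with y hy
  rw [← isCoveringMap_exp.constOn_of_comp isPreconnected_Ioo hcont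
    (fun _ _ _ _ ↦ Subtype.ext ((hexp _).trans (hexp _).symm)) hy hy₀, sub_add_cancel]

lemma continuousOn_cauchyTransform_vertical (hf : Integrable f) (t : ℝ) :
    ContinuousOn (fun y : ℝ ↦ cauchyTransform f (t + y * I)) (Ioi 0) :=
  (differentiableOn_cauchyTransform hf).continuousOn.comp (by fun_prop) fun y hy ↦ by
    simpa using hy

-- `exp (i P)` is bounded, and its boundary values have modulus `exp (-u) ≠ 0`.
lemma ae_exists_tendsto_cauchyTransform_of_nonneg (hu : Integrable u) (h0 : ∀ x, 0 ≤ u x) :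
    ∀ᵐ t : ℝ, ∃ l, Tendsto (fun y : ℝ ↦ cauchyTransform (fun x ↦ u x) (t + y * I)) (𝓝[>] 0)
      (𝓝 l) := by
  have hnorm (z : ℂ) : ‖exp (I * cauchyTransform (fun x ↦ u x) z)‖ =
      Real.exp (-(cauchyTransform (fun x ↦ u x) z).im) := by simp [norm_exp]
  obtain ⟨b, hb⟩ := ae_exists_tendsto_of_bounded (M := 1)
    ((differentiableOn_cauchyTransform hu.ofReal).const_mul I).cexp fun z hz ↦ by
      rw [RCLike.ofReal_eq_complex_ofReal, hnorm]
      exact Real.exp_le_one_iff.2 (neg_nonpos.2 (im_cauchyTransform_ofReal_nonneg hu h0 hz))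
  filter_upwards [hb, ae_tendsto_im_cauchyTransform_ofReal hu] with t hexp him
  have hbt : ‖b t‖ = Real.exp (-u t) :=
    tendsto_nhds_unique hexp.norm (by
      simp only [RCLike.ofReal_eq_complex_ofReal, hnorm]; exact him.neg.rexp)
  obtain ⟨c, hc⟩ := exists_tendsto_of_tendsto_exp
    (continuousOn_const.mul (continuousOn_cauchyTransform_vertical hu.ofReal t))
    (norm_pos_iff.1 (hbt ▸ Real.exp_pos _)) hexp
  exact ⟨_, (hc.const_mul I⁻¹).congr fun y ↦ inv_mul_cancel_left₀ I_ne_zero _⟩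

lemma cauchyTransform_ofReal (hu : Integrable u) (hz : 0 < z.im) :
    cauchyTransform (fun x ↦ u x) z = cauchyTransform (fun x ↦ ((u x)⁺ : ℝ)) z -
      cauchyTransform (fun x ↦ ((u x)⁻ : ℝ)) z := by
  have hp : Integrable fun x ↦ (((u x)⁺ : ℝ) : ℂ) := hu.pos_part.ofReal
  have hn : Integrable fun x ↦ (((u x)⁻ : ℝ) : ℂ) := hu.neg_part.ofReal
  rw [sub_eq_add_neg, ← neg_one_mul, ← cauchyTransform_const_mul,
    ← cauchyTransform_add hp (hn.const_mul _) hz]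
  congr 1 with x
  rw [neg_one_mul, ← sub_eq_add_neg, ← ofReal_sub, posPart_sub_negPart]

lemma cauchyTransform_eq_re_add_im (hf : Integrable f) (hz : 0 < z.im) :
    cauchyTransform f z =
      cauchyTransform (fun x ↦ (f x).re) z + I * cauchyTransform (fun x ↦ (f x).im) z := by
  have hre : Integrable fun x ↦ ((f x).re : ℂ) := hf.re.ofReal
  have him : Integrable fun x ↦ ((f x).im : ℂ) := hf.im.ofReal
  rw [← cauchyTransform_const_mul, ← cauchyTransform_add hre (him.const_mul _) hz]
  congr 1 with x
  rw [mul_comm, re_add_im]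

theorem ae_exists_tendsto_cauchyTransform (hf : Integrable f) :
    ∀ᵐ t : ℝ, ∃ l, Tendsto (fun y : ℝ ↦ cauchyTransform f (t + y * I)) (𝓝[>] 0) (𝓝 l) := by
  have hreal {u : ℝ → ℝ} (hu : Integrable u) : ∀ᵐ t : ℝ, ∃ l,
      Tendsto (fun y : ℝ ↦ cauchyTransform (fun x ↦ u x) (t + y * I)) (𝓝[>] 0) (𝓝 l) := by
    filter_upwards
      [ae_exists_tendsto_cauchyTransform_of_nonneg hu.pos_part fun x ↦ posPart_nonneg _,
      ae_exists_tendsto_cauchyTransform_of_nonneg hu.neg_part fun x ↦ negPart_nonneg _]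
      with t ⟨p, hp⟩ ⟨q, hq⟩
    refine ⟨p - q, (hp.sub hq).congr' ?_⟩
    filter_upwards [self_mem_nhdsWithin] with y hy
    exact (cauchyTransform_ofReal hu (by simpa using hy)).symm
  filter_upwards [hreal hf.re, hreal hf.im] with t ⟨p, hp⟩ ⟨q, hq⟩
  refine ⟨p + I * q, (hp.add (hq.const_mul I)).congr' ?_⟩
  filter_upwards [self_mem_nhdsWithin] with y hy
  exact (cauchyTransform_eq_re_add_im hf (by simpa using hy)).symm

lemma FHT_eq_limUnder (f : ℝ → ℂ) (t : ℝ) :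
    FHT f t = limUnder (𝓝[>] 0) (truncatedHilbert ((Ioo (-1) 1).indicator f) t) := by
  unfold FHT truncatedHilbert
  congr! 3 with ε
  rw [ofPred_and, inter_comm, ofPred_mem_eq, ← setIntegral_indicator measurableSet_Ioo]
  congr! 2 with x
  simp [indicator, ite_div]

theorem ae_tendsto_truncatedHilbert_FHT (hf : IntegrableOn f (Ioo (-1) 1)) :
    ∀ᵐ t : ℝ, Tendsto (truncatedHilbert ((Ioo (-1) 1).indicator f) t) (𝓝[>] 0) (𝓝 (FHT f t)) := by
  have hf := hf.integrable_indicator measurableSet_Ioo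
  filter_upwards [ae_exists_tendsto_cauchyTransform hf,
    ae_tendsto_cauchyTransform_sub_truncatedHilbert hf] with t ⟨l, hl⟩ hdiff
  rw [FHT_eq_limUnder]
  exact tendsto_nhds_limUnder ⟨_, (hl.sub hdiff).congr fun y ↦ sub_sub_cancel _ _⟩

theorem ae_tendsto_cauchyTransform_FHT (hf : IntegrableOn f (Ioo (-1) 1)) :
    ∀ᵐ t : ℝ, Tendsto (fun y : ℝ ↦ cauchyTransform ((Ioo (-1) 1).indicator f) (t + y * I)) (𝓝[>] 0)
      (𝓝 (FHT f t + I * (Ioo (-1) 1).indicator f t)) := by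
  filter_upwards [ae_tendsto_truncatedHilbert_FHT hf,
    ae_tendsto_cauchyTransform_sub_truncatedHilbert (hf.integrable_indicator measurableSet_Ioo)]
    with t hlim hdiff
  exact (hlim.add hdiff).congr fun y ↦ add_sub_cancel _ _

end BoundaryValues

section SquareRoot

variable {x : ℝ} {z : ℂ}

/-- The branch of `√(z² - 1)` that is holomorphic in the upper half-plane, continuous up to
`ℝ \ {±1}`, and asymptotic to `z` at infinity. The rotation by `-I` moves the upper half-plane to
the right half-plane, where the principal power is continuous up to the boundary. -/
def sqrtSqSubOne (z : ℂ) : ℂ :=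
  I * ((-I * (z - 1)) ^ (1 / 2 : ℂ) * (-I * (z + 1)) ^ (1 / 2 : ℂ))

lemma sqrtSqSubOne_sq (z : ℂ) : sqrtSqSubOne z ^ 2 = z ^ 2 - 1 := by
  simp only [sqrtSqSubOne, mul_pow, one_div, cpow_ofNat_inv_pow]
  linear_combination (z ^ 2 - 1) * (I ^ 2 - 1) * I_sq

lemma norm_sqrtSqSubOne (z : ℂ) : ‖sqrtSqSubOne z‖ = √‖z ^ 2 - 1‖ := by
  rw [← sqrtSqSubOne_sq, norm_pow, Real.sqrt_sq (norm_nonneg _)]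

lemma neg_I_mul_mem_slitPlane (hz : 0 ≤ z.im) (h : z ≠ 0) : -I * z ∈ slitPlane := by
  obtain hz | hz := hz.lt_or_eq
  · exact Or.inl (by simpa using hz)
  · exact Or.inr (by simpa using fun hre ↦ h (Complex.ext hre hz.symm))

lemma differentiableAt_sqrtSqSubOne (hz : 0 ≤ z.im) (h : z ^ 2 ≠ 1) :
    DifferentiableAt ℂ sqrtSqSubOne z := by
  have h1 : z - 1 ≠ 0 := fun h1 ↦ h (by linear_combination (z + 1) * h1)
  have h2 : z + 1 ≠ 0 := fun h2 ↦ h (by linear_combination (z - 1) * h2)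
  refine ((DifferentiableAt.cpow_const (by fun_prop) ?_).mul
    (DifferentiableAt.cpow_const (by fun_prop) ?_)).const_mul I
  · exact neg_I_mul_mem_slitPlane (by simpa using hz) h1
  · exact neg_I_mul_mem_slitPlane (by simpa using hz) h2

lemma sq_ne_one_of_im_pos (hz : 0 < z.im) : z ^ 2 ≠ 1 := by
  intro h
  obtain rfl | rfl := mul_self_eq_one_iff.1 (sq z ▸ h) <;> simp at hz

lemma sqrtSqSubOne_ne_zero (h : z ^ 2 ≠ 1) : sqrtSqSubOne z ≠ 0 := fun h0 ↦
  h (sub_eq_zero.1 (by rw [← sqrtSqSubOne_sq, h0]; simp))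

lemma differentiableOn_sqrtSqSubOne : DifferentiableOn ℂ sqrtSqSubOne upperHalfPlaneSet :=
  fun _ hz ↦ (differentiableAt_sqrtSqSubOne (le_of_lt hz)
    (sq_ne_one_of_im_pos hz)).differentiableWithinAt

lemma sqrtSqSubOne_of_mem_Ioo (hx : x ∈ Ioo (-1 : ℝ) 1) :
    sqrtSqSubOne x = I * √(1 - x ^ 2) := by
  have h1 : 0 < 1 - x := sub_pos.2 hx.2
  have h2 : 0 < 1 + x := by linarith [hx.1]
  have e1 : -I * ((x : ℂ) - 1) = ((1 - x : ℝ) : ℂ) * I := by push_cast; ring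
  have e2 : -I * ((x : ℂ) + 1) = ((1 + x : ℝ) : ℂ) * -I := by push_cast; ring
  rw [sqrtSqSubOne, e1, e2, cpow_def_of_ne_zero (mul_ne_zero (ofReal_ne_zero.2 h1.ne') I_ne_zero),
    cpow_def_of_ne_zero (mul_ne_zero (ofReal_ne_zero.2 h2.ne') (neg_ne_zero.2 I_ne_zero)),
    log_ofReal_mul h1 I_ne_zero, log_ofReal_mul h2 (neg_ne_zero.2 I_ne_zero), log_I,
    log_neg_I, ← exp_add]
  have hsqrt : √(1 - x ^ 2) = Real.exp ((Real.log (1 - x) + Real.log (1 + x)) / 2) := by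
    rw [← Real.log_mul h1.ne' h2.ne', Real.exp_half, Real.exp_log (mul_pos h1 h2)]
    ring_nf
  rw [hsqrt]
  push_cast
  ring_nf

lemma im_sqrtSqSubOne_of_one_lt_abs (hx : 1 < |x|) : (sqrtSqSubOne x).im = 0 := by
  have hsq := sqrtSqSubOne_sq x
  have hpos : 1 < x ^ 2 := (one_lt_sq_iff_one_lt_abs x).2 hx
  have hre : (sqrtSqSubOne x).re ^ 2 - (sqrtSqSubOne x).im ^ 2 = x ^ 2 - 1 := by
    simpa [sq] using congrArg re hsq
  have him : (sqrtSqSubOne x).re * (sqrtSqSubOne x).im = 0 := by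
    have := congrArg im hsq
    simp only [sq, mul_im, sub_im, ofReal_re, ofReal_im, one_im] at this
    linarith
  refine (mul_eq_zero.1 him).resolve_left fun h ↦ ?_
  rw [h] at hre
  nlinarith [sq_nonneg (sqrtSqSubOne x).im]

end SquareRoot

section Majorant

variable {s x : ℝ}

lemma integrable_abs_sub_rpow_stdCauchy (hs0 : 0 ≤ s) (hs : s < 1) (a : ℝ) :
    Integrable (fun x ↦ |x - a| ^ (-s)) stdCauchy := by
  have hball : IntegrableOn (fun x : ℝ ↦ |x| ^ (-s)) (Metric.ball 0 1) :=
    integrableOn_ball_of_norm_le_rpow (by simp) (by simpa using hs) (C := 1) (α := s)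
      (ae_of_all _ fun x ↦ by simp [Real.abs_rpow_of_nonneg (abs_nonneg x)])
      (Measurable.aestronglyMeasurable (by fun_prop))
  have hnear := (hball.integrable_indicator Metric.isOpen_ball.measurableSet).comp_sub_right a
  refine ((integrable_const 1).add (integrable_stdCauchy_of_integrable hnear)).mono'
    (Measurable.aestronglyMeasurable (by fun_prop)) (ae_of_all _ fun x ↦ ?_)
  rw [Real.norm_of_nonneg (by positivity), Pi.add_apply]
  by_cases hx : x - a ∈ Metric.ball 0 1
  · rw [indicator_of_mem hx]
    linarith
  · rw [indicator_of_notMem hx, add_zero]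
    exact Real.rpow_le_one_of_one_le_of_nonpos (by simpa using hx) (by linarith)

lemma abs_sq_sub_one_rpow_le (hs : 0 ≤ s) (hx : x ^ 2 ≠ 1) :
    |x ^ 2 - 1| ^ (-s) ≤ |x - 1| ^ (-s) + |x - (-1)| ^ (-s) := by
  have h1 : 0 < |x - 1| := abs_pos.2 fun h ↦ hx (by linear_combination (x + 1) * h)
  have h2 : 0 < |x - (-1)| := abs_pos.2 fun h ↦ hx (by linear_combination (x - 1) * h)
  have hfac : |x ^ 2 - 1| = |x - 1| * |x - (-1)| := by rw [← abs_mul]; ring_nf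
  have hsum : 2 ≤ |x - 1| + |x - (-1)| := by
    linarith [neg_le_abs (x - 1), le_abs_self (x - (-1))]
  have hp1 := Real.rpow_nonneg h1.le (-s)
  have hp2 := Real.rpow_nonneg h2.le (-s)
  rw [hfac]
  obtain h | h : 1 ≤ |x - (-1)| ∨ 1 ≤ |x - 1| := by by_contra! h; linarith [h.1, h.2]
  · refine le_add_of_le_of_nonneg (Real.rpow_le_rpow_of_nonpos h1 ?_ (by linarith)) hp2
    exact le_mul_of_one_le_right h1.le h
  · refine le_add_of_nonneg_of_le hp1 (Real.rpow_le_rpow_of_nonpos h2 ?_ (by linarith))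
    exact le_mul_of_one_le_left h2.le h

lemma ae_sq_ne_one : ∀ᵐ x : ℝ, x ^ 2 ≠ 1 := by
  refine ((Set.toFinite {(1 : ℝ), -1}).countable.ae_notMem volume).mono fun x hx h ↦ hx ?_
  simpa using mul_self_eq_one_iff.1 (sq x ▸ h)

lemma integrable_abs_sq_sub_one_rpow_stdCauchy (hs0 : 0 ≤ s) (hs : s < 1) :
    Integrable (fun x ↦ |x ^ 2 - 1| ^ (-s)) stdCauchy := by
  refine ((integrable_abs_sub_rpow_stdCauchy hs0 hs 1).add
    (integrable_abs_sub_rpow_stdCauchy hs0 hs (-1))).mono'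
    (Measurable.aestronglyMeasurable (by fun_prop)) ?_
  filter_upwards [stdCauchy_absolutelyContinuous_volume.ae_le ae_sq_ne_one] with x hx
  rw [Real.norm_of_nonneg (by positivity)]
  exact abs_sq_sub_one_rpow_le hs0 hx

end Majorant

section Damping

variable {δ : ℝ} {w : ℂ}

/-- The factor `(1 - iδw)⁻¹`. For `δ > 0` it damps the growth of a function `w` with values in the
upper half-plane, keeps norm at most one, and tends to one as `δ → 0⁺`. -/
def damp (δ : ℝ) (w : ℂ) : ℂ := (1 - I * δ * w)⁻¹

lemma one_le_norm_one_sub_I_mul (hδ : 0 ≤ δ) (hw : 0 ≤ w.im) : 1 ≤ ‖1 - I * δ * w‖ := by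
  refine le_trans ?_ (re_le_norm _)
  simpa using mul_nonneg hδ hw

lemma one_sub_I_mul_ne_zero (hδ : 0 ≤ δ) (hw : 0 ≤ w.im) : 1 - I * δ * w ≠ 0 :=
  norm_pos_iff.1 (one_pos.trans_le (one_le_norm_one_sub_I_mul hδ hw))

lemma norm_damp_le_one (hδ : 0 ≤ δ) (hw : 0 ≤ w.im) : ‖damp δ w‖ ≤ 1 := by
  rw [damp, norm_inv]
  exact inv_le_one_of_one_le₀ (one_le_norm_one_sub_I_mul hδ hw)

lemma one_add_norm_mul_norm_damp_le (hδ : 0 < δ) (hw : 0 ≤ w.im) :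
    (1 + ‖w‖) * ‖damp δ w‖ ≤ 1 + 2 / δ := by
  have hone := one_le_norm_one_sub_I_mul hδ.le hw
  have hδw : δ * ‖w‖ ≤ 1 + ‖1 - I * δ * w‖ := calc
    δ * ‖w‖ = ‖1 - (1 - I * δ * w)‖ := by simp [abs_of_pos hδ]
    _ ≤ 1 + ‖1 - I * δ * w‖ := (norm_sub_le _ _).trans_eq (by simp)
  have hw' : ‖w‖ ≤ 2 / δ * ‖1 - I * δ * w‖ := by
    rw [div_mul_eq_mul_div, le_div_iff₀ hδ]
    linarith
  rw [damp, norm_inv, ← div_eq_mul_inv, div_le_iff₀ (one_pos.trans_le hone)]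
  linarith

lemma differentiableAt_damp (hδ : 0 ≤ δ) (hw : 0 ≤ w.im) : DifferentiableAt ℂ (damp δ) w :=
  DifferentiableAt.inv (by fun_prop) (one_sub_I_mul_ne_zero hδ hw)

lemma tendsto_damp_nhds_zero (w : ℂ) : Tendsto (fun δ ↦ damp δ w) (𝓝 0) (𝓝 1) := by
  have hcont : ContinuousAt (fun δ : ℝ ↦ damp δ w) 0 :=
    ContinuousAt.inv₀ (by fun_prop) (by simp)
  simpa [damp] using hcont.tendsto

end Damping

section Herglotz

variable {ι : Type*} [Fintype ι] {P : ι → ℂ → ℂ} {p : ι → ℝ → ℂ} {B : ℂ → ℂ} {b : ℝ → ℂ}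
  {C y δ : ℝ}

lemma ae_im_nonneg_of_tendsto_vertical {G : ℂ → ℂ} {g : ℝ → ℂ} (hG0 : ∀ z, 0 < z.im → 0 ≤ (G z).im)
    (hg : ∀ᵐ x : ℝ, Tendsto (fun η : ℝ ↦ G (x + η * I)) (𝓝[>] 0) (𝓝 (g x))) :
    ∀ᵐ x, 0 ≤ (g x).im := by
  filter_upwards [hg] with x hx
  refine ge_of_tendsto ((continuous_im.tendsto _).comp hx) ?_
  filter_upwards [self_mem_nhdsWithin] with η hη
  exact hG0 _ (by simpa using hη)

lemma aestronglyMeasurable_of_tendsto_vertical {G : ℂ → ℂ} {g : ℝ → ℂ}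
    (hG : DifferentiableOn ℂ G upperHalfPlaneSet)
    (hg : ∀ᵐ x : ℝ, Tendsto (fun η : ℝ ↦ G (x + η * I)) (𝓝[>] 0) (𝓝 (g x))) :
    AEStronglyMeasurable g := by
  have hseq := (tendsto_nhdsWithin_iff.2 ⟨tendsto_one_div_add_atTop_nhds_zero_nat (𝕜 := ℝ),
    Eventually.of_forall fun n ↦ mem_Ioi.2 Nat.one_div_pos_of_nat⟩)
  exact aestronglyMeasurable_of_tendsto_ae atTop
    (fun n ↦ (continuous_horizontal hG Nat.one_div_pos_of_nat).aestronglyMeasurable)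
    (hg.mono fun x hx ↦ hx.comp hseq)

lemma poisson_representation_damped (hP : ∀ k, DifferentiableOn ℂ (P k) upperHalfPlaneSet)
    (hP0 : ∀ k z, 0 < z.im → 0 ≤ (P k z).im)
    (hp : ∀ k, ∀ᵐ x : ℝ, Tendsto (fun η : ℝ ↦ P k (x + η * I)) (𝓝[>] 0) (𝓝 (p k x)))
    (hB : DifferentiableOn ℂ B upperHalfPlaneSet)
    (hBP : ∀ z, 0 < z.im → ‖B z‖ ≤ C * ∏ k, (1 + ‖P k z‖))
    (hb : ∀ᵐ x : ℝ, Tendsto (fun η : ℝ ↦ B (x + η * I)) (𝓝[>] 0) (𝓝 (b x)))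
    (hδ : 0 < δ) (hy : 0 < y) (t : ℝ) :
    B (t + y * I) * ∏ k, damp δ (P k (t + y * I)) =
      ∫ x, halfPlaneKernel y (x - t) • (b x * ∏ k, damp δ (p k x)) := by
  have hbound : ∀ z, 0 < z.im →
      ‖B z * ∏ k, damp δ (P k z)‖ ≤ |C| * (1 + 2 / δ) ^ Fintype.card ι := fun z hz ↦ calc
    ‖B z * ∏ k, damp δ (P k z)‖ ≤ |C| * (∏ k, (1 + ‖P k z‖)) * ∏ k, ‖damp δ (P k z)‖ := by
      rw [norm_mul, norm_prod]
      gcongr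
      exact (hBP z hz).trans (by gcongr; exact le_abs_self C)
    _ = |C| * ∏ k, ((1 + ‖P k z‖) * ‖damp δ (P k z)‖) := by
      rw [Finset.prod_mul_distrib, mul_assoc]
    _ ≤ |C| * ∏ _k : ι, (1 + 2 / δ) := by
      gcongr with k
      exact one_add_norm_mul_norm_damp_le hδ (hP0 k z hz)
    _ = _ := by simp
  have hdiff : DifferentiableOn ℂ (fun z ↦ B z * ∏ k, damp δ (P k z)) upperHalfPlaneSet :=
    hB.mul <| DifferentiableOn.fun_finsetProd fun k _ z hz ↦
      (differentiableAt_damp hδ.le (hP0 k z hz)).comp_differentiableWithinAt z (hP k z hz)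
  refine poisson_representation (m := fun _ ↦ |C| * (1 + 2 / δ) ^ Fintype.card ι) hdiff
    (fun η hη ↦ ⟨_, fun z hz ↦ hbound z (hη.trans_le hz)⟩) (integrable_const _)
    (fun η hη ↦ ae_of_all _ fun x ↦ hbound _ (by simpa using hη)) ?_ hy t
  filter_upwards [hb, ae_all_iff.2 hp,
    ae_all_iff.2 fun k ↦ ae_im_nonneg_of_tendsto_vertical (hP0 k) (hp k)] with x hbx hpx hpx0
  exact hbx.mul <| tendsto_finsetProd _ fun k _ ↦
    (differentiableAt_damp hδ.le (hpx0 k)).continuousAt.tendsto.comp (hpx k)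

theorem poisson_representation_of_herglotz (hP : ∀ k, DifferentiableOn ℂ (P k) upperHalfPlaneSet)
    (hP0 : ∀ k z, 0 < z.im → 0 ≤ (P k z).im)
    (hp : ∀ k, ∀ᵐ x : ℝ, ∃ l, Tendsto (fun η : ℝ ↦ P k (x + η * I)) (𝓝[>] 0) (𝓝 l))
    (hB : DifferentiableOn ℂ B upperHalfPlaneSet)
    (hBP : ∀ z, 0 < z.im → ‖B z‖ ≤ C * ∏ k, (1 + ‖P k z‖))
    (hb : ∀ᵐ x : ℝ, Tendsto (fun η : ℝ ↦ B (x + η * I)) (𝓝[>] 0) (𝓝 (b x)))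
    (hbi : Integrable b stdCauchy) (hy : 0 < y) (t : ℝ) :
    B (t + y * I) = ∫ x, halfPlaneKernel y (x - t) • b x := by
  choose p hp using fun k ↦ (hp k).choice
  have hlim : Tendsto (fun δ : ℝ ↦ B (t + y * I) * ∏ k, damp δ (P k (t + y * I))) (𝓝[>] 0)
      (𝓝 (B (t + y * I))) := by
    simpa using ((tendsto_finsetProd Finset.univ fun k _ ↦
      tendsto_damp_nhds_zero (P k (t + y * I))).const_mul (B (t + y * I))).mono_left
        nhdsWithin_le_nhds
  have hmeas : ∀ k, AEStronglyMeasurable (p k) := fun k ↦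
    aestronglyMeasurable_of_tendsto_vertical (hP k) (hp k)
  have hker : AEStronglyMeasurable fun x ↦ halfPlaneKernel y (x - t) :=
    (measurable_halfPlaneKernel.comp (measurable_sub_const t)).aestronglyMeasurable
  have hdamped : Tendsto (fun δ : ℝ ↦ ∫ x, halfPlaneKernel y (x - t) • (b x * ∏ k, damp δ (p k x)))
      (𝓝[>] 0) (𝓝 (B (t + y * I))) :=
    hlim.congr' <| eventually_nhdsWithin_of_forall fun δ hδ ↦
      poisson_representation_damped hP hP0 hp hB hBP hb hδ hy t
  refine tendsto_nhds_unique hdamped ?_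
  refine tendsto_integral_filter_of_dominated_convergence
    (fun x ↦ ‖halfPlaneKernel y (x - t) • b x‖) (Eventually.of_forall fun δ ↦ ?_) ?_
    (integrable_halfPlaneKernel_smul hy t hbi).norm (ae_of_all _ fun x ↦ ?_)
  · refine hker.smul ((hbi.1.mono_ac volume_absolutelyContinuous_stdCauchy).mul ?_)
    refine Finset.aestronglyMeasurable_fun_prod _ fun k _ ↦ ?_
    exact (((hmeas k).const_mul (I * δ)).aemeasurable.const_sub 1).inv.aestronglyMeasurable
  · filter_upwards [self_mem_nhdsWithin] with δ hδ
    filter_upwards [ae_all_iff.2 fun k ↦ ae_im_nonneg_of_tendsto_vertical (hP0 k) (hp k)] with x hx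
    rw [norm_smul, norm_smul, norm_mul, norm_prod]
    gcongr
    exact mul_le_of_le_one_right (norm_nonneg _) <| Finset.prod_le_one
      (fun _ _ ↦ norm_nonneg _) fun k _ ↦ norm_damp_le_one (le_of_lt hδ) (hx k)
  · simpa using (((tendsto_finsetProd Finset.univ fun k _ ↦
      tendsto_damp_nhds_zero (p k x)).const_mul (b x)).const_smul
        (halfPlaneKernel y (x - t))).mono_left nhdsWithin_le_nhds

end Herglotz

section BoundaryIm

variable {G : ℂ → ℂ} {b : ℝ → ℂ} {v : ℝ → ℝ}

-- A holomorphic function is determined by its imaginary part up to a constant.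
lemma exists_eq_cauchyTransform_add_const (hG : DifferentiableOn ℂ G upperHalfPlaneSet)
    (hrep : ∀ y : ℝ, 0 < y → ∀ t : ℝ, G (t + y * I) = ∫ x, halfPlaneKernel y (x - t) • b x)
    (hb : Integrable b stdCauchy) (hv : Integrable v) (hbv : ∀ᵐ x, (b x).im = v x) :
    ∃ c, ∀ z, 0 < z.im → G z = cauchyTransform (fun x ↦ v x) z + c := by
  have him (z : ℂ) (hz : 0 < z.im) : (G z - cauchyTransform (fun x ↦ v x) z).im = 0 := by
    rw [← re_add_im z, sub_im, im_cauchyTransform_ofReal hv hz, hrep _ hz, sub_eq_zero]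
    refine (integral_im (integrable_halfPlaneKernel_smul hz _ hb)).symm.trans
      (integral_congr_ae ?_)
    filter_upwards [hbv] with x hx
    simp [hx]
  have hv' : Integrable fun x ↦ (v x : ℂ) := hv.ofReal
  obtain ⟨c, hc⟩ := AnalyticOnNhd.eq_const_of_im_eq_const
    ((hG.sub (differentiableOn_cauchyTransform hv')).analyticOnNhd isOpen_upperHalfPlaneSet)
    him isOpen_upperHalfPlaneSet ((convex_halfSpace_im_gt 0).isConnected ⟨I, by simp⟩)
  exact ⟨c, fun z hz ↦ eq_add_of_sub_eq' (hc z hz)⟩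

end BoundaryIm

section FiniteHilbertTransform

variable {f g : ℝ → ℂ}

lemma FHT_congr_ae (h : f =ᵐ[μI] g) : FHT f = FHT g := by
  ext t
  unfold FHT
  congr! 3 with ε
  refine integral_congr_ae (ae_mono (Measure.restrict_mono (fun x hx ↦ hx.1) le_rfl) ?_)
  filter_upwards [h] with x hx
  rw [hx]

lemma truncatedHilbert_continuousLinearMap_comp (L : ℂ →L[ℝ] ℂ) (hf : Integrable f) {ε : ℝ}
    (hε : 0 < ε) (t : ℝ) :
    truncatedHilbert (fun x ↦ L (f x)) t ε = L (truncatedHilbert f t ε) := by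
  have hL (r : ℝ) (w : ℂ) : L (r * w) = r * L w := by simpa using L.map_smul r w
  have hdiv (x : ℝ) (w : ℂ) : w / ((x : ℂ) - t) = ((x - t)⁻¹ : ℝ) * w := by
    push_cast
    exact div_eq_inv_mul _ _
  have hint := L.integral_comp_comm (integrableOn_div_sub (t := t) hf hε)
  simp only [hdiv, hL] at hint
  simp only [truncatedHilbert, hdiv, ← ofReal_inv, hL, hint]

theorem ae_FHT_continuousLinearMap_comp (L : ℂ →L[ℝ] ℂ) (hf : IntegrableOn f (Ioo (-1) 1)) :
    ∀ᵐ t : ℝ, FHT (fun x ↦ L (f x)) t = L (FHT f t) := by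
  have hLf : IntegrableOn (fun x ↦ L (f x)) (Ioo (-1) 1) := L.integrable_comp hf
  filter_upwards [ae_tendsto_truncatedHilbert_FHT hf, ae_tendsto_truncatedHilbert_FHT hLf]
    with t ht hLt
  refine tendsto_nhds_unique hLt (((L.continuous.tendsto _).comp ht).congr' ?_)
  filter_upwards [self_mem_nhdsWithin] with ε hε
  rw [Function.comp_apply, ← truncatedHilbert_continuousLinearMap_comp L
    (hf.integrable_indicator measurableSet_Ioo) hε]
  congr 1 with x
  by_cases hx : x ∈ Ioo (-1 : ℝ) 1 <;> simp [hx]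

theorem ae_FHT_add (hf : IntegrableOn f (Ioo (-1) 1)) (hg : IntegrableOn g (Ioo (-1) 1)) :
    ∀ᵐ t : ℝ, FHT (fun x ↦ f x + g x) t = FHT f t + FHT g t := by
  have hfg : IntegrableOn (fun x ↦ f x + g x) (Ioo (-1) 1) := hf.add hg
  filter_upwards [ae_tendsto_cauchyTransform_FHT hf, ae_tendsto_cauchyTransform_FHT hg,
    ae_tendsto_cauchyTransform_FHT hfg] with t hft hgt hfgt
  simp only [indicator_add] at hfgt
  have hlim := tendsto_nhds_unique hfgt <| (hft.add hgt).congr' <|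
    eventually_nhdsWithin_of_forall fun η hη ↦ (cauchyTransform_add
      (hf.integrable_indicator measurableSet_Ioo) (hg.integrable_indicator measurableSet_Ioo)
      (by simpa using hη)).symm
  linear_combination hlim

lemma ae_norm_FHT_le_of_one_lt_abs (hf : IntegrableOn f (Ioo (-1) 1)) :
    ∀ᵐ x : ℝ, 1 < |x| → ‖FHT f x‖ ≤ (Real.pi * (|x| - 1))⁻¹ * ∫ s in Ioo (-1) 1, ‖f s‖ := by
  filter_upwards [ae_tendsto_cauchyTransform_FHT hf] with x hlim hx
  have hxI : x ∉ Ioo (-1 : ℝ) 1 := fun h ↦ hx.not_gt (abs_lt.2 h)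
  rw [indicator_of_notMem hxI, mul_zero, add_zero] at hlim
  refine le_of_tendsto hlim.norm (Eventually.of_forall fun η ↦ ?_)
  rw [← integral_indicator measurableSet_Ioo]
  simp_rw [← norm_indicator_eq_indicator_norm]
  refine norm_cauchyTransform_le (hf.integrable_indicator measurableSet_Ioo) (sub_pos.2 hx)
    fun s hs ↦ ?_
  have hs : |s| < 1 := abs_lt.2 (show s ∈ Ioo (-1) 1 from mem_of_indicator_ne_zero hs)
  calc |x| - 1 ≤ |s - x| := by linarith [abs_sub_abs_le_abs_sub x s, abs_sub_comm x s]
    _ ≤ ‖(s : ℂ) - (x + η * I)‖ := by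
      simpa using abs_re_le_norm ((s : ℂ) - (x + η * I))

end FiniteHilbertTransform

section BoundaryProduct

variable {f : ℝ → ℂ} {u : ℝ → ℝ} {x : ℝ}

/-- The boundary values on `ℝ` of `√(z² - 1)` times the Cauchy transform of `f` on `(-1, 1)`;
comparing their imaginary part with `√(1 - x²) T f` yields the inversion formula. -/
def boundaryProduct (f : ℝ → ℂ) (x : ℝ) : ℂ :=
  sqrtSqSubOne x * (FHT f x + I * (Ioo (-1) 1).indicator f x)

lemma tendsto_ofReal_add_mul_I (x : ℝ) :
    Tendsto (fun η : ℝ ↦ (x : ℂ) + η * I) (𝓝[>] 0) (𝓝 x) :=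
  tendsto_nhdsWithin_of_tendsto_nhds (Continuous.tendsto' (by fun_prop) _ _ (by simp))

lemma tendsto_sqrtSqSubOne_vertical (hx : x ^ 2 ≠ 1) :
    Tendsto (fun η : ℝ ↦ sqrtSqSubOne (x + η * I)) (𝓝[>] 0) (𝓝 (sqrtSqSubOne x)) := by
  have hx : (x : ℂ) ^ 2 ≠ 1 := by exact_mod_cast hx
  exact (differentiableAt_sqrtSqSubOne (by simp) hx).continuousAt.tendsto.comp
    (tendsto_ofReal_add_mul_I x)

lemma ae_tendsto_sqrtSqSubOne_mul_cauchyTransform (hf : IntegrableOn f (Ioo (-1) 1)) :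
    ∀ᵐ x : ℝ, Tendsto (fun η : ℝ ↦
      sqrtSqSubOne (x + η * I) * cauchyTransform ((Ioo (-1) 1).indicator f) (x + η * I)) (𝓝[>] 0)
      (𝓝 (boundaryProduct f x)) := by
  filter_upwards [ae_sq_ne_one, ae_tendsto_cauchyTransform_FHT hf] with x hx hlim
  exact (tendsto_sqrtSqSubOne_vertical hx).mul hlim

lemma differentiableOn_sqrtSqSubOne_mul_cauchyTransform (hf : IntegrableOn f (Ioo (-1) 1)) :
    DifferentiableOn ℂ (fun z ↦ sqrtSqSubOne z * cauchyTransform ((Ioo (-1) 1).indicator f) z)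
      upperHalfPlaneSet :=
  differentiableOn_sqrtSqSubOne.mul
    (differentiableOn_cauchyTransform (hf.integrable_indicator measurableSet_Ioo))

lemma sqrt_abs_sq_sub_one_le (hx : 1 < |x|) :
    √|x ^ 2 - 1| ≤ (|x| - 1) * (2 * (1 + |x ^ 2 - 1| ^ (-(1 / 2) : ℝ))) := by
  have hpos : 0 < x ^ 2 - 1 := sub_pos.2 ((one_lt_sq_iff_one_lt_abs x).2 hx)
  set r := √|x ^ 2 - 1|
  have hr : 0 < r := Real.sqrt_pos.2 (abs_pos.2 hpos.ne')
  have hsq : r ^ 2 = |x| ^ 2 - 1 := by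
    rw [Real.sq_sqrt (abs_nonneg _), abs_of_pos hpos, sq_abs]
  have hx_le : |x| ≤ 1 + r := abs_le_of_sq_le_sq (by nlinarith [sq_abs x]) (by positivity)
  rw [Real.rpow_neg (abs_nonneg _), ← Real.sqrt_eq_rpow]
  have hmul : r * (1 + r⁻¹) = r + 1 := by field_simp
  refine le_of_mul_le_mul_left ?_ hr
  nlinarith

lemma one_lt_abs_of_notMem_Ioo (h : x ^ 2 ≠ 1) (hx : x ∉ Ioo (-1) 1) : 1 < |x| :=
  lt_of_le_of_ne (le_of_not_gt fun hlt ↦ hx (abs_lt.1 hlt))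
    fun heq ↦ h (by rw [← sq_abs, ← heq, one_pow])

lemma ae_norm_boundaryProduct_le (hf : IntegrableOn f (Ioo (-1) 1)) :
    ∀ᵐ x, ‖boundaryProduct f x‖ ≤
      ‖(Ioo (-1) 1).indicator (FHT f) x‖ + ‖(Ioo (-1) 1).indicator f x‖ +
        2 * Real.pi⁻¹ * (∫ s in Ioo (-1) 1, ‖f s‖) * (1 + |x ^ 2 - 1| ^ (-(1 / 2) : ℝ)) := by
  filter_upwards [ae_sq_ne_one, ae_norm_FHT_le_of_one_lt_abs hf] with x hx1 hbound
  have hnorm : ‖sqrtSqSubOne x‖ = √|x ^ 2 - 1| := by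
    rw [norm_sqrtSqSubOne]
    norm_cast
  rw [boundaryProduct, norm_mul, hnorm]
  by_cases hx : x ∈ Ioo (-1) 1
  · have hle : √|x ^ 2 - 1| ≤ 1 :=
      Real.sqrt_le_one.2 (abs_le.2 (by constructor <;> nlinarith [hx.1, hx.2]))
    rw [indicator_of_mem hx, indicator_of_mem hx]
    refine (mul_le_of_le_one_left (norm_nonneg _) hle).trans
      (le_add_of_le_of_nonneg ?_ (by positivity))
    exact (norm_add_le _ _).trans (by simp)
  · have hx1 : 1 < |x| := one_lt_abs_of_notMem_Ioo hx1 hx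
    have hx0 : |x| - 1 ≠ 0 := (sub_pos.2 hx1).ne'
    simp only [indicator_of_notMem hx, mul_zero, add_zero, norm_zero, zero_add]
    calc √|x ^ 2 - 1| * ‖FHT f x‖
      _ ≤ (|x| - 1) * (2 * (1 + |x ^ 2 - 1| ^ (-(1 / 2) : ℝ))) *
          ((Real.pi * (|x| - 1))⁻¹ * ∫ s in Ioo (-1) 1, ‖f s‖) :=
        mul_le_mul (sqrt_abs_sq_sub_one_le hx1) (hbound hx1) (norm_nonneg _)
          ((Real.sqrt_nonneg _).trans (sqrt_abs_sq_sub_one_le hx1))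
      _ = _ := by field_simp

lemma integrable_boundaryProduct (hf : IntegrableOn f (Ioo (-1) 1))
    (hTf : IntegrableOn (FHT f) (Ioo (-1) 1)) : Integrable (boundaryProduct f) stdCauchy := by
  have hmeas : AEStronglyMeasurable (boundaryProduct f) :=
    aestronglyMeasurable_of_tendsto_vertical (differentiableOn_sqrtSqSubOne_mul_cauchyTransform hf)
      (ae_tendsto_sqrtSqSubOne_mul_cauchyTransform hf)
  have hind {h : ℝ → ℂ} (hh : IntegrableOn h (Ioo (-1) 1)) :
      Integrable (fun x ↦ ‖(Ioo (-1) 1).indicator h x‖) stdCauchy :=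
    (integrable_stdCauchy_of_integrable (hh.integrable_indicator measurableSet_Ioo)).norm
  refine (((hind hTf).add (hind hf)).add (((integrable_const 1).add
    (integrable_abs_sq_sub_one_rpow_stdCauchy one_half_pos.le one_half_lt_one)).const_mul
      (2 * Real.pi⁻¹ * ∫ s in Ioo (-1) 1, ‖f s‖))).mono'
    (hmeas.mono_ac stdCauchy_absolutelyContinuous_volume) ?_
  exact stdCauchy_absolutelyContinuous_volume.ae_le (ae_norm_boundaryProduct_le hf)

lemma norm_sqrtSqSubOne_le (z : ℂ) : ‖sqrtSqSubOne z‖ ≤ 1 + ‖z‖ := by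
  rw [norm_sqrtSqSubOne]
  refine Real.sqrt_le_iff.2 ⟨by positivity, (norm_sub_le _ _).trans ?_⟩
  rw [norm_pow, norm_one]
  nlinarith [norm_nonneg z]

lemma ofReal_comp_indicator (s : Set ℝ) (u : ℝ → ℝ) :
    (fun x ↦ ((s.indicator u x : ℝ) : ℂ)) = s.indicator fun x ↦ (u x : ℂ) := by
  ext x
  by_cases hx : x ∈ s <;> simp [hx]

theorem poisson_representation_sqrtSqSubOne_mul_cauchyTransform (hu : IntegrableOn u (Ioo (-1) 1))
    (hTu : IntegrableOn (FHT fun x ↦ u x) (Ioo (-1) 1)) {y : ℝ} (hy : 0 < y) (t : ℝ) :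
    sqrtSqSubOne (t + y * I) *
        cauchyTransform ((Ioo (-1) 1).indicator fun x ↦ (u x : ℂ)) (t + y * I) =
      ∫ x, halfPlaneKernel y (x - t) • boundaryProduct (fun x ↦ u x) x := by
  have hu' : IntegrableOn (fun x ↦ (u x : ℂ)) (Ioo (-1) 1) := hu.ofReal
  set U : ℝ → ℝ := (Ioo (-1) 1).indicator u
  have hUi : Integrable U := hu.integrable_indicator measurableSet_Ioo
  have hp : Integrable fun x ↦ (((U x)⁺ : ℝ) : ℂ) := hUi.pos_part.ofReal
  have hn : Integrable fun x ↦ (((U x)⁻ : ℝ) : ℂ) := hUi.neg_part.ofReal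
  let P : Fin 3 → ℂ → ℂ :=
    ![id, cauchyTransform fun x ↦ ((U x)⁺ : ℝ), cauchyTransform fun x ↦ ((U x)⁻ : ℝ)]
  refine poisson_representation_of_herglotz (P := P) (C := 1) ?_ ?_ ?_
    (differentiableOn_sqrtSqSubOne_mul_cauchyTransform hu') (fun z hz ↦ ?_)
    (ae_tendsto_sqrtSqSubOne_mul_cauchyTransform hu') (integrable_boundaryProduct hu' hTu) hy t
  · exact Fin.forall_fin_succ.2 ⟨differentiableOn_id, Fin.forall_fin_two.2
      ⟨differentiableOn_cauchyTransform hp, differentiableOn_cauchyTransform hn⟩⟩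
  · exact Fin.forall_fin_succ.2 ⟨fun z hz ↦ hz.le, Fin.forall_fin_two.2
      ⟨fun z ↦ im_cauchyTransform_ofReal_nonneg hUi.pos_part fun x ↦ posPart_nonneg _,
        fun z ↦ im_cauchyTransform_ofReal_nonneg hUi.neg_part fun x ↦ negPart_nonneg _⟩⟩
  · exact Fin.forall_fin_succ.2 ⟨ae_of_all _ fun x ↦ ⟨x, tendsto_ofReal_add_mul_I x⟩,
      Fin.forall_fin_two.2
      ⟨ae_exists_tendsto_cauchyTransform hp, ae_exists_tendsto_cauchyTransform hn⟩⟩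
  · have hsub := norm_sub_le (P 1 z) (P 2 z)
    rw [← ofReal_comp_indicator, cauchyTransform_ofReal hUi hz, norm_mul, one_mul,
      Fin.prod_univ_three, mul_assoc]
    gcongr
    · exact norm_sqrtSqSubOne_le z
    · refine hsub.trans ?_
      nlinarith [norm_nonneg (P 1 z), norm_nonneg (P 2 z)]

lemma ae_re_FHT_ofReal (hu : IntegrableOn u (Ioo (-1) 1)) :
    ∀ᵐ x, ((FHT (fun x ↦ u x) x).re : ℂ) = FHT (fun x ↦ u x) x := by
  have hu' : IntegrableOn (fun x ↦ (u x : ℂ)) (Ioo (-1) 1) := hu.ofReal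
  filter_upwards [ae_FHT_continuousLinearMap_comp (ofRealCLM.comp reCLM) hu'] with x hx
  simpa using hx.symm

lemma ae_im_boundaryProduct_ofReal (hu : IntegrableOn u (Ioo (-1) 1)) :
    ∀ᵐ x, (boundaryProduct (fun x ↦ u x) x).im =
      (Ioo (-1) 1).indicator (fun x ↦ √(1 - x ^ 2) * (FHT (fun x ↦ u x) x).re) x := by
  filter_upwards [ae_sq_ne_one, ae_re_FHT_ofReal hu] with x hx1 hreal
  have him : (FHT (fun x ↦ u x) x).im = 0 := by rw [← hreal, ofReal_im]
  rw [boundaryProduct]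
  by_cases hx : x ∈ Ioo (-1) 1
  · simp [hx, sqrtSqSubOne_of_mem_Ioo hx, him]
  · simp [hx, im_sqrtSqSubOne_of_one_lt_abs (one_lt_abs_of_notMem_Ioo hx1 hx), him]

lemma integrableOn_sqrt_mul (hf : IntegrableOn f (Ioo (-1) 1)) :
    IntegrableOn (fun x ↦ (√(1 - x ^ 2) : ℂ) * f x) (Ioo (-1) 1) := by
  refine hf.bdd_mul (c := 1) (Measurable.aestronglyMeasurable (by fun_prop))
    (ae_of_all _ fun x ↦ ?_)
  rw [norm_real, Real.norm_of_nonneg (Real.sqrt_nonneg _)]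
  exact Real.sqrt_le_one.2 (by nlinarith)

theorem exists_ae_FHT_sqrt_mul_FHT_ofReal (hu : IntegrableOn u (Ioo (-1) 1))
    (hTu : IntegrableOn (FHT fun x ↦ u x) (Ioo (-1) 1)) :
    ∃ c : ℂ, ∀ᵐ x ∂μI, FHT (fun x ↦ (√(1 - x ^ 2) : ℂ) * FHT (fun x ↦ u x) x) x =
      -(√(1 - x ^ 2) * u x) - c := by
  set F := FHT fun x ↦ u x
  have hu' : IntegrableOn (fun x ↦ (u x : ℂ)) (Ioo (-1) 1) := hu.ofReal
  have hwF := integrableOn_sqrt_mul hTu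
  have hv : IntegrableOn (fun x ↦ √(1 - x ^ 2) * (F x).re) (Ioo (-1) 1) := by
    simpa [IntegrableOn] using hwF.re
  have hwF_ae : (fun x ↦ ((√(1 - x ^ 2) * (F x).re : ℝ) : ℂ)) =ᵐ[μI]
      fun x ↦ (√(1 - x ^ 2) : ℂ) * F x := by
    filter_upwards [ae_restrict_of_ae (ae_re_FHT_ofReal hu)] with x hx
    rw [ofReal_mul, hx]
  obtain ⟨c, hc⟩ := exists_eq_cauchyTransform_add_const
    (differentiableOn_sqrtSqSubOne_mul_cauchyTransform hu')
    (fun y hy t ↦ poisson_representation_sqrtSqSubOne_mul_cauchyTransform hu hTu hy t)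
    (integrable_boundaryProduct hu' hTu) (hv.integrable_indicator measurableSet_Ioo)
    (ae_im_boundaryProduct_ofReal hu)
  rw [ofReal_comp_indicator] at hc
  refine ⟨c, ?_⟩
  rw [← FHT_congr_ae hwF_ae]
  filter_upwards [hwF_ae, ae_restrict_mem measurableSet_Ioo,
    ae_restrict_of_ae (ae_tendsto_sqrtSqSubOne_mul_cauchyTransform hu'),
    ae_restrict_of_ae (ae_tendsto_cauchyTransform_FHT hv.ofReal)] with x hx hxI hleft hright
  have hlim := tendsto_nhds_unique (hleft.congr' <| eventually_nhdsWithin_of_forall fun (η : ℝ) hη ↦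
    hc (x + η * I) (by simpa using hη)) (hright.add_const c)
  rw [boundaryProduct, sqrtSqSubOne_of_mem_Ioo hxI, indicator_of_mem hxI,
    indicator_of_mem hxI] at hlim
  linear_combination -hlim - I * hx + √(1 - x ^ 2) * u x * I_sq

end BoundaryProduct

section Arcsine

variable {x : ℝ} {z : ℂ}

lemma im_le_norm_sqrtSqSubOne (hz : 0 ≤ z.im) : z.im ≤ ‖sqrtSqSubOne z‖ := by
  have hsub : z.im ≤ ‖z - 1‖ := by simpa using im_le_norm (z - 1)
  have hadd : z.im ≤ ‖z + 1‖ := by simpa using im_le_norm (z + 1)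
  rw [norm_sqrtSqSubOne, show z ^ 2 - 1 = (z - 1) * (z + 1) by ring, norm_mul]
  exact Real.le_sqrt_of_sq_le (by rw [sq]; gcongr)

lemma abs_re_sq_sub_one_le_norm (z : ℂ) : |z.re ^ 2 - 1| ≤ ‖z ^ 2 - 1‖ := by
  have hsub : |z.re - 1| ≤ ‖z - 1‖ := by simpa using abs_re_le_norm (z - 1)
  have hadd : |z.re + 1| ≤ ‖z + 1‖ := by simpa using abs_re_le_norm (z + 1)
  rw [show z ^ 2 - 1 = (z - 1) * (z + 1) by ring, norm_mul,
    show z.re ^ 2 - 1 = (z.re - 1) * (z.re + 1) by ring, abs_mul]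
  gcongr

lemma norm_inv_sqrtSqSubOne_le (h : z.re ^ 2 ≠ 1) :
    ‖(sqrtSqSubOne z)⁻¹‖ ≤ |z.re ^ 2 - 1| ^ (-(1 / 2) : ℝ) := by
  rw [norm_inv, norm_sqrtSqSubOne, Real.rpow_neg (abs_nonneg _), ← Real.sqrt_eq_rpow]
  have := abs_pos.2 (sub_ne_zero.2 h)
  gcongr
  exact abs_re_sq_sub_one_le_norm z

lemma inv_sqrt_eq_rpow (hx : x ∈ Ioo (-1) 1) :
    (√(1 - x ^ 2))⁻¹ = |x ^ 2 - 1| ^ (-(1 / 2) : ℝ) := by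
  rw [Real.rpow_neg (abs_nonneg _), ← Real.sqrt_eq_rpow, abs_sub_comm,
    abs_of_pos (by nlinarith [hx.1, hx.2])]

lemma integrableOn_abs_sq_sub_one_rpow {s : ℝ} (hs0 : 0 ≤ s) (hs : s < 1) :
    IntegrableOn (fun x : ℝ ↦ |x ^ 2 - 1| ^ (-s)) (Ioo (-1) 1) :=
  ((locallyIntegrable_of_integrable_stdCauchy
    (integrable_abs_sq_sub_one_rpow_stdCauchy hs0 hs)).integrableOn_isCompact
      isCompact_Icc).mono_set Ioo_subset_Icc_self

lemma integrableOn_inv_sqrt : IntegrableOn (fun x : ℝ ↦ (√(1 - x ^ 2))⁻¹) (Ioo (-1) 1) :=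
  (integrableOn_abs_sq_sub_one_rpow one_half_pos.le one_half_lt_one).congr_fun
    (fun _ hx ↦ (inv_sqrt_eq_rpow hx).symm) measurableSet_Ioo

lemma integrableOn_ofReal_inv_sqrt :
    IntegrableOn (fun x : ℝ ↦ (√(1 - x ^ 2) : ℂ)⁻¹) (Ioo (-1) 1) := by
  simpa [IntegrableOn] using integrableOn_inv_sqrt.ofReal (𝕜 := ℂ)

lemma differentiableOn_neg_inv_sqrtSqSubOne :
    DifferentiableOn ℂ (fun z ↦ -(sqrtSqSubOne z)⁻¹) upperHalfPlaneSet :=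
  (differentiableOn_sqrtSqSubOne.fun_inv fun _ hz ↦
    sqrtSqSubOne_ne_zero (sq_ne_one_of_im_pos hz)).fun_neg

lemma ae_tendsto_neg_inv_sqrtSqSubOne : ∀ᵐ x : ℝ,
    Tendsto (fun η : ℝ ↦ -(sqrtSqSubOne (x + η * I))⁻¹) (𝓝[>] 0) (𝓝 (-(sqrtSqSubOne x)⁻¹)) := by
  filter_upwards [ae_sq_ne_one] with x hx
  exact ((tendsto_sqrtSqSubOne_vertical hx).inv₀
    (sqrtSqSubOne_ne_zero (by exact_mod_cast hx))).neg

lemma ae_im_neg_inv_sqrtSqSubOne :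
    ∀ᵐ x : ℝ, (-(sqrtSqSubOne x)⁻¹).im = (Ioo (-1) 1).indicator (fun x ↦ (√(1 - x ^ 2))⁻¹) x := by
  filter_upwards [ae_sq_ne_one] with x hx1
  by_cases hx : x ∈ Ioo (-1) 1
  · simp [hx, sqrtSqSubOne_of_mem_Ioo hx, ← ofReal_inv]
  · simp [hx, im_sqrtSqSubOne_of_one_lt_abs (one_lt_abs_of_notMem_Ioo hx1 hx)]

lemma integrable_neg_inv_sqrtSqSubOne :
    Integrable (fun x : ℝ ↦ -(sqrtSqSubOne x)⁻¹) stdCauchy := by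
  refine (integrable_abs_sq_sub_one_rpow_stdCauchy one_half_pos.le one_half_lt_one).mono'
    ((aestronglyMeasurable_of_tendsto_vertical differentiableOn_neg_inv_sqrtSqSubOne
      ae_tendsto_neg_inv_sqrtSqSubOne).mono_ac stdCauchy_absolutelyContinuous_volume) ?_
  filter_upwards [stdCauchy_absolutelyContinuous_volume.ae_le ae_sq_ne_one] with x hx
  rw [norm_neg]
  exact norm_inv_sqrtSqSubOne_le (z := x) hx

lemma poisson_representation_neg_inv_sqrtSqSubOne {y : ℝ} (hy : 0 < y) (t : ℝ) :
    -(sqrtSqSubOne (t + y * I))⁻¹ = ∫ x, halfPlaneKernel y (x - t) • -(sqrtSqSubOne x)⁻¹ := by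
  refine poisson_representation differentiableOn_neg_inv_sqrtSqSubOne
    (fun η hη ↦ ⟨η⁻¹, fun z hz ↦ ?_⟩)
    (integrable_abs_sq_sub_one_rpow_stdCauchy one_half_pos.le one_half_lt_one)
    (fun η _ ↦ ?_) ae_tendsto_neg_inv_sqrtSqSubOne hy t
  · rw [norm_neg, norm_inv]
    gcongr
    exact hz.trans (im_le_norm_sqrtSqSubOne (hη.le.trans hz))
  · filter_upwards [ae_sq_ne_one] with x hx
    simpa using norm_inv_sqrtSqSubOne_le (z := x + η * I) (by simpa using hx)

theorem cauchyTransform_inv_sqrt (hz : 0 < z.im) :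
    cauchyTransform ((Ioo (-1) 1).indicator fun x ↦ ((√(1 - x ^ 2))⁻¹ : ℂ)) z =
      -(sqrtSqSubOne z)⁻¹ := by
  have hw := integrableOn_inv_sqrt.integrable_indicator measurableSet_Ioo
  obtain ⟨c, hc⟩ := exists_eq_cauchyTransform_add_const differentiableOn_neg_inv_sqrtSqSubOne
    (fun _ ↦ poisson_representation_neg_inv_sqrtSqSubOne) integrable_neg_inv_sqrtSqSubOne hw
    ae_im_neg_inv_sqrtSqSubOne
  set W := fun x ↦ (((Ioo (-1) 1).indicator (fun x ↦ (√(1 - x ^ 2))⁻¹) x : ℝ) : ℂ) with hW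
  have hWi : Integrable W := hw.ofReal
  have hbound : ∀ y : ℝ, 0 < y → ‖c‖ ≤ (1 + Real.pi⁻¹ * ∫ x, ‖W x‖) * y⁻¹ := by
    intro y hy
    have him : (y * I).im = y := by simp
    have hsq : ‖-(sqrtSqSubOne (y * I))⁻¹‖ ≤ y⁻¹ := by
      rw [norm_neg, norm_inv]
      gcongr
      exact him.ge.trans (im_le_norm_sqrtSqSubOne (hy.le.trans him.ge))
    have hcau := norm_cauchyTransform_le hWi hy (z := y * I) fun x _ ↦
      him.ge.trans (im_le_norm_ofReal_sub x (y * I))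
    rw [← sub_eq_of_eq_add' (hc (y * I) (by simpa using hy))]
    calc _ ≤ y⁻¹ + (Real.pi * y)⁻¹ * ∫ x, ‖W x‖ := (norm_sub_le _ _).trans (add_le_add hsq hcau)
      _ = _ := by rw [mul_inv]; ring
  have hc0 : c = 0 := norm_le_zero_iff.1 <| ge_of_tendsto
    (by simpa using tendsto_inv_atTop_zero.const_mul (1 + Real.pi⁻¹ * ∫ x, ‖W x‖))
    ((eventually_gt_atTop 0).mono hbound)
  rw [hc z hz, hc0, add_zero, hW, ofReal_comp_indicator]
  simp

theorem ae_FHT_inv_sqrt : ∀ᵐ x ∂μI, FHT (fun x ↦ (√(1 - x ^ 2) : ℂ)⁻¹) x = 0 := by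
  filter_upwards [ae_restrict_mem measurableSet_Ioo,
    ae_restrict_of_ae ae_tendsto_neg_inv_sqrtSqSubOne,
    ae_restrict_of_ae (ae_tendsto_cauchyTransform_FHT integrableOn_ofReal_inv_sqrt)]
    with x hx hsq hcau
  have hlim := tendsto_nhds_unique hcau <| hsq.congr' <|
    eventually_nhdsWithin_of_forall fun (η : ℝ) hη ↦
      (cauchyTransform_inv_sqrt (by simpa using hη)).symm
  rw [indicator_of_mem hx, sqrtSqSubOne_of_mem_Ioo hx, mul_inv, inv_I] at hlim
  linear_combination hlim

end Arcsine

section LlogL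

open Real (posLog)

variable {f g : ℝ → ℂ}

lemma memLlogL_iff_posLog : MemLlogL f ↔
    AEStronglyMeasurable f μI ∧ IntegrableOn (fun x ↦ ‖f x‖ * posLog ‖f x‖) (Ioo (-1) 1) := by
  simp only [MemLlogL, Real.posLog, max_comm]

lemma le_one_add_mul_posLog {s : ℝ} (hs : 0 ≤ s) : s ≤ 1 + s * posLog s := by
  obtain rfl | hs := hs.eq_or_lt
  · simp
  have hlog : 1 - s⁻¹ ≤ posLog s := (Real.one_sub_inv_le_log_of_pos hs).trans (le_max_right _ _)
  have := mul_le_mul_of_nonneg_left hlog hs.le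
  rw [mul_sub, mul_inv_cancel₀ hs.ne'] at this
  linarith

lemma add_mul_posLog_add_le {s t : ℝ} (hs : 0 ≤ s) (ht : 0 ≤ t) :
    (s + t) * posLog (s + t) ≤
      2 * (s * posLog s + t * posLog t) + 2 * Real.log 2 * (s + t) := by
  wlog hst : s ≤ t generalizing s t
  · rw [add_comm s t, add_comm (s * posLog s)]
    exact this ht hs (le_of_not_ge hst)
  have hlog : posLog (s + t) ≤ Real.log 2 + posLog t := calc
    posLog (s + t) ≤ posLog (2 * t) :=
      Real.posLog_le_posLog (add_nonneg hs ht) (by linarith)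
    _ ≤ posLog 2 + posLog t := Real.posLog_mul
    _ = Real.log 2 + posLog t := by rw [Real.posLog_eq_log (by norm_num)]
  have := Real.posLog_nonneg (x := s)
  have := Real.posLog_nonneg (x := t)
  have := Real.log_nonneg one_le_two
  calc (s + t) * posLog (s + t) ≤ (s + t) * (Real.log 2 + posLog t) := by gcongr
    _ ≤ (t + t) * posLog t + (s + t) * Real.log 2 := by nlinarith
    _ ≤ _ := by nlinarith [mul_nonneg hs (Real.posLog_nonneg (x := s))]

lemma mul_posLog_le_rpow {s p : ℝ} (hs : 0 ≤ s) (hp : 1 < p) :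
    s * posLog s ≤ (p - 1)⁻¹ * s ^ p := by
  obtain rfl | hs := hs.eq_or_lt
  · simp [Real.zero_rpow (by linarith : p ≠ 0)]
  have hlog : posLog s ≤ s ^ (p - 1) / (p - 1) :=
    max_le (div_nonneg (by positivity) (by linarith)) (Real.log_le_rpow_div hs.le (by linarith))
  calc s * posLog s ≤ s * (s ^ (p - 1) / (p - 1)) := by gcongr
    _ = (p - 1)⁻¹ * s ^ p := by rw [Real.rpow_sub_one hs.ne']; field_simp

lemma integrableOn_of_memLlogL (hf : MemLlogL f) : IntegrableOn f (Ioo (-1) 1) := by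
  obtain ⟨hmeas, hint⟩ := memLlogL_iff_posLog.1 hf
  exact ((integrableOn_const (C := (1 : ℝ)) (by simp)).add hint).mono' hmeas
    (ae_of_all _ fun x ↦ le_one_add_mul_posLog (norm_nonneg _))

lemma memLlogL_of_le {h : ℝ → ℝ} (hf : AEStronglyMeasurable f μI)
    (hh : IntegrableOn h (Ioo (-1) 1)) (hle : ∀ᵐ x ∂μI, ‖f x‖ * posLog ‖f x‖ ≤ h x) :
    MemLlogL f := by
  refine memLlogL_iff_posLog.2 ⟨hf, hh.mono' ?_ (hle.mono fun x hx ↦ ?_)⟩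
  · exact hf.norm.mul (Real.continuous_posLog.comp_aestronglyMeasurable hf.norm)
  · rwa [Real.norm_of_nonneg (mul_nonneg (norm_nonneg _) Real.posLog_nonneg)]

theorem memLlogL_add (hf : MemLlogL f) (hg : MemLlogL g) : MemLlogL fun x ↦ f x + g x := by
  have hfi := integrableOn_of_memLlogL hf
  have hgi := integrableOn_of_memLlogL hg
  refine memLlogL_of_le (hf.1.add hg.1) ((((memLlogL_iff_posLog.1 hf).2.add
    (memLlogL_iff_posLog.1 hg).2).const_mul 2).add
      ((hfi.norm.add hgi.norm).const_mul (2 * Real.log 2))) (ae_of_all _ fun x ↦ ?_)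
  exact (mul_le_mul (norm_add_le _ _) (Real.posLog_le_posLog (norm_nonneg _) (norm_add_le _ _))
    Real.posLog_nonneg (by positivity)).trans
      (add_mul_posLog_add_le (norm_nonneg (f x)) (norm_nonneg (g x)))

lemma memLlogL_congr_ae (h : f =ᵐ[μI] g) (hf : MemLlogL f) : MemLlogL g :=
  ⟨hf.1.congr h, hf.2.congr (h.mono fun x hx ↦ by simp only [hx])⟩

theorem memLlogL_of_integrableOn_rpow {p : ℝ} (hp : 1 < p) (hf : AEStronglyMeasurable f μI)
    (hfp : IntegrableOn (fun x ↦ ‖f x‖ ^ p) (Ioo (-1) 1)) : MemLlogL f :=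
  memLlogL_of_le hf (hfp.const_mul (p - 1)⁻¹)
    (ae_of_all _ fun _ ↦ mul_posLog_le_rpow (norm_nonneg _) hp)

lemma memLlogL_const_mul_inv_sqrt (c : ℂ) : MemLlogL fun x ↦ c * (√(1 - x ^ 2) : ℂ)⁻¹ := by
  refine memLlogL_of_integrableOn_rpow (p := 3 / 2) (by norm_num)
    (Measurable.aestronglyMeasurable (by fun_prop)) ?_
  refine IntegrableOn.congr_fun ((integrableOn_abs_sq_sub_one_rpow (s := 3 / 4) (by norm_num)
    (by norm_num)).const_mul (‖c‖ ^ (3 / 2 : ℝ))) (fun x hx ↦ ?_) measurableSet_Ioo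
  have hnorm : ‖c * (√(1 - x ^ 2) : ℂ)⁻¹‖ = ‖c‖ * |x ^ 2 - 1| ^ (-(1 / 2) : ℝ) := by
    rw [← inv_sqrt_eq_rpow hx, norm_mul, ← ofReal_inv, norm_real,
      Real.norm_of_nonneg (by positivity)]
  rw [hnorm, Real.mul_rpow (norm_nonneg c) (by positivity), ← Real.rpow_mul (abs_nonneg _)]
  norm_num

end LlogL

section Inversion

variable {f g : ℝ → ℂ}

lemma exists_ae_continuousLinearMap_FHT_sqrt_mul_FHT (L : ℂ →L[ℝ] ℝ)
    (hf : IntegrableOn f (Ioo (-1) 1)) (hTf : IntegrableOn (FHT f) (Ioo (-1) 1)) :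
    ∃ c : ℂ, ∀ᵐ x ∂μI, (L (FHT (fun x ↦ (√(1 - x ^ 2) : ℂ) * FHT f x) x) : ℂ) =
      -(√(1 - x ^ 2) * L (f x)) - c := by
  have hTLf : (FHT fun x ↦ (L (f x) : ℂ)) =ᵐ[μI] fun x ↦ (L (FHT f x) : ℂ) :=
    ae_restrict_of_ae (ae_FHT_continuousLinearMap_comp (ofRealCLM.comp L) hf)
  have hLTf : IntegrableOn (fun x ↦ (L (FHT f x) : ℂ)) (Ioo (-1) 1) :=
    (ofRealCLM.comp L).integrable_comp hTf
  obtain ⟨c, hc⟩ := exists_ae_FHT_sqrt_mul_FHT_ofReal (u := fun x ↦ L (f x))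
    (L.integrable_comp hf) (hLTf.congr hTLf.symm)
  have hcongr : (fun x ↦ (√(1 - x ^ 2) : ℂ) * FHT (fun x ↦ (L (f x) : ℂ)) x) =ᵐ[μI]
      fun x ↦ (L (√(1 - x ^ 2) * FHT f x) : ℂ) := by
    filter_upwards [hTLf] with x hx
    have hL : L (√(1 - x ^ 2) * FHT f x) = √(1 - x ^ 2) * L (FHT f x) := by
      simpa using L.map_smul (√(1 - x ^ 2)) (FHT f x)
    rw [hx, hL, ofReal_mul]
  refine ⟨c, ?_⟩
  rw [FHT_congr_ae hcongr] at hc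
  filter_upwards [hc, ae_restrict_of_ae (ae_FHT_continuousLinearMap_comp (ofRealCLM.comp L)
    (integrableOn_sqrt_mul hTf))] with x hx hLx
  exact hLx.symm.trans hx

theorem exists_ae_FHT_sqrt_mul_FHT (hf : IntegrableOn f (Ioo (-1) 1))
    (hTf : IntegrableOn (FHT f) (Ioo (-1) 1)) :
    ∃ c : ℂ, ∀ᵐ x ∂μI, FHT (fun x ↦ (√(1 - x ^ 2) : ℂ) * FHT f x) x =
      -(√(1 - x ^ 2) * f x) - c := by
  obtain ⟨c, hc⟩ := exists_ae_continuousLinearMap_FHT_sqrt_mul_FHT reCLM hf hTf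
  obtain ⟨d, hd⟩ := exists_ae_continuousLinearMap_FHT_sqrt_mul_FHT imCLM hf hTf
  refine ⟨c + d * I, ?_⟩
  filter_upwards [hc, hd] with x hre him
  simp only [reCLM_apply, imCLM_apply] at hre him
  linear_combination hre + him * I - re_add_im (FHT (fun x ↦ (√(1 - x ^ 2) : ℂ) * FHT f x) x) -
    √(1 - x ^ 2) * re_add_im (f x)

theorem exists_hatT_ae_eq_add_inv_sqrt (hf : IntegrableOn f (Ioo (-1) 1))
    (hg : IntegrableOn g (Ioo (-1) 1)) (hfg : FHT f =ᵐ[μI] g) :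
    ∃ c : ℂ, hatT g =ᵐ[μI] fun x ↦ f x + c * (√(1 - x ^ 2) : ℂ)⁻¹ := by
  obtain ⟨c, hc⟩ := exists_ae_FHT_sqrt_mul_FHT hf (hg.congr hfg.symm)
  have hcongr : (fun x ↦ (√(1 - x ^ 2) : ℂ) * FHT f x) =ᵐ[μI]
      fun x ↦ (√(1 - x ^ 2) : ℂ) * g x := hfg.mono fun x hx ↦ by simp only [hx]
  rw [FHT_congr_ae hcongr] at hc
  refine ⟨c, ?_⟩
  filter_upwards [hc, ae_restrict_mem measurableSet_Ioo] with x hx hxI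
  have hw : (√(1 - x ^ 2) : ℂ) ≠ 0 :=
    ofReal_ne_zero.2 (Real.sqrt_pos.2 (by nlinarith [hxI.1, hxI.2])).ne'
  rw [hatT, hx]
  field_simp
  ring

theorem FHT_add_const_mul_inv_sqrt (hf : IntegrableOn f (Ioo (-1) 1)) (c : ℂ) :
    FHT (fun x ↦ f x + c * (√(1 - x ^ 2) : ℂ)⁻¹) =ᵐ[μI] FHT f := by
  filter_upwards [ae_FHT_inv_sqrt,
    ae_restrict_of_ae (ae_FHT_add hf (integrableOn_ofReal_inv_sqrt.const_mul c)),
    ae_restrict_of_ae (ae_FHT_continuousLinearMap_comp (ContinuousLinearMap.mul ℝ ℂ c)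
      integrableOn_ofReal_inv_sqrt)] with x hker hadd hmul
  simp only [ContinuousLinearMap.mul_apply'] at hmul
  rw [hadd, hmul, hker, mul_zero, add_zero]

end Inversion

end FiniteHilbert

open FiniteHilbert

/-- A function `g ∈ L¹(-1,1)` belongs to the range `T(L log L)` iff `T̂(g) ∈ L log L`
and `T(T̂(g)) = g` a.e. -/
theorem range_characterization (g : ℝ → ℂ) (hg : IntegrableOn g (Set.Ioo (-1 : ℝ) 1)) :
    (∃ f : ℝ → ℂ, MemLlogL f ∧ FHT f =ᵐ[μI] g) ↔
      (MemLlogL (hatT g) ∧ FHT (hatT g) =ᵐ[μI] g) := by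
  refine ⟨?_, fun h ↦ ⟨hatT g, h⟩⟩
  rintro ⟨f, hf, hfg⟩
  have hfi := integrableOn_of_memLlogL hf
  obtain ⟨c, hc⟩ := exists_hatT_ae_eq_add_inv_sqrt hfi hg hfg
  refine ⟨memLlogL_congr_ae hc.symm (memLlogL_add hf (memLlogL_const_mul_inv_sqrt c)), ?_⟩
  rw [FHT_congr_ae hc]
  exact (FHT_add_const_mul_inv_sqrt hfi c).trans hfg
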